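/- Fix $k\in\mathbb N$ and let $Z=\{0,1,2\}^{\{0,\dots,k\}}$. All graphs are finite multigraphs; a graph is \emph{acyclic} if it has no loop, no two parallel edges (they form a cycle of length $2$) and no cycle of length at least $3$. \textbf{Patterns.} For $u,v\in Z$ let $(u\boxplus v)_j=\min(2,u_j+v_j)$, and let $\cup_2$ be the union of multisets in which multiplicities are added and then capped at $2$. A \emph{pattern} is a multiset $p$ over $Z$ with all multiplicities at most $2$ such that exactly one vector $z$ of $p$, of multiplicity $1$, satisfies $z_0=1$, and every other vector $v$ of $p$ satisfies $v_0=0$. The \emph{canonical forest} $F_p$ is the labeled forest consisting of one disjoint simple path for each vector $v$ of $p$ (counted with multiplicity), the path having exactly $v_j$ vertices labeled $j$ for each $j\in\{0,\dots,k\}$ (in some fixed order); it has exactly one vertex labeled $0$, its \emph{zero-vertex}. \textbf{Glueings.} An \emph{extension datum} $d=(H_0,J,L)$ consists of a finite simple forest $H_0$ on a vertex set $W$ disjoint from $V(F_p)$, a symmetric irreflexive relation $J$ on $\{1,\dots,k\}$ and a map $L:W\to 2^{\{1,\dots,k\}}$. For a labeled forest $F$, $\mathrm{Glue}(F;d)$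 is the multigraph on $V(F)\cup W$ whose edges are the edges of $F$, the edges of $H_0$, one further edge $uv$ for each unordered pair $\{u,v\}\subseteq V(F)$ with $(\mathrm{lab}(u),\mathrm{lab}(v))\in J$ (parallel to the edge $uv$ of $F$ if there is one), and one edge $wv$ for all $w\in W$, $v\in V(F)$ with $\mathrm{lab}(v)\in L(w)$. \textbf{Clique extensions.} An \emph{extended labeled graph} is a multigraph with vertex labels in $\mathbb N$ and exactly one vertex (the zero-vertex) labeled $0$. A \emph{clique expression} is built from the operations: create a vertex labeled $i$ together with an isolated zero-vertex; relabel all vertices labeled $i$ to $j$; join, i.e. add one new edge between each vertex labeled $i$ and each vertex labeled $j$, even if they are already adjacent; and disjoint union followed by identification of the two zero-vertices. Here $i\neq j$ are positive integers. A \emph{clique extension} $\tau$ is a clique expression with exactly one occurrence of a variable operand; $\tau(F)$ is the graph obtained when the variable is replaced by the extended labeled graph $F$, and $G_\tau$ is the graph obtained when it is replaced by the graph that has a zero-vertex only. A \emph{partial solution} of $G_\tau$ is a set $S$ of vertices of $G_\tau$ that contains the zero-vertex and induces an acyclic subgraph. A pattern $p$ is \emph{compatible} with $S$ under $\tau$ if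 $V(F_p)\cup S$ induces an acyclic subgraph of $\tau(F_p)$. Two finite families $P,Q$ of patterns are \emph{equivalent} if for every clique extension $\tau$ and every partial solution $S$ of $G_\tau$ the numbers of patterns in $P$ and in $Q$ that are compatible with $S$ under $\tau$ are congruent modulo $2$. \textbf{Statement.} Let $v_1,v_2,v_3\in Z$, let $R$ be a multiset over $Z$, and assume that $p_1=\langle v_1,v_2\boxplus v_3\rangle\cup_2R$, $p_2=\langle v_2,v_1\boxplus v_3\rangle\cup_2R$, $p_3=\langle v_3,v_1\boxplus v_2\rangle\cup_2R$ and $p_4=\langle v_1\boxplus v_2\boxplus v_3\rangle\cup_2R$ are patterns. Then: (a) for every extension datum $d$, the number of indices $i\in\{1,2,3,4\}$ such that $\mathrm{Glue}(F_{p_i};d)$ is acyclic is even; equivalently, the number of indices $i\in\{2,3,4\}$ such that $\mathrm{Glue}(F_{p_i};d)$ is acyclic is congruent modulo $2$ to $1$ if $\mathrm{Glue}(F_{p_1};d)$ is acyclic and to $0$ otherwise; (b) for every clique extension $\tau$ and every partial solution $S$ of $G_\tau$, the number of indices $i\in\{1,2,3,4\}$ such that $p_i$ is compatible with $S$ under $\tau$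 is even; (c) the family $\{p_2\}\,\Delta\,\{p_3\}\,\Delta\,\{p_4\}$ is equivalent to $\{p_1\}$. -/

import Mathlib

/-! ### Multigraphs -/

/-- The multigraph with vertex set `V` and edge set `E`, the edge `e` having ends `ends e`. -/
def multigraphOfEnds {V E : Type} (ends : E → Sym2 V) : Graph V E where
  vertexSet := Set.univ
  IsLink e x y := ends e = s(x, y)
  edgeSet := Set.univ
  isLink_symm := fun _ _ => ⟨fun _ _ h => h.trans Sym2.eq_swap⟩
  eq_or_eq_of_isLink_of_isLink := by
    intro e x y v w h h'
    rcases Sym2.eq_iff.1 (h.symm.trans h') with h | h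
    · exact Or.inl h.1
    · exact Or.inr h.1
  edge_mem_iff_exists_isLink := fun e => by
    simp only [Set.mem_univ, true_iff]
    exact Sym2.ind (fun x y => ⟨x, y, rfl⟩) (ends e)
  left_mem_of_isLink := fun _ _ _ _ => Set.mem_univ _

/-- A multigraph is acyclic if it has no cycle, where a cycle of length `n ≥ 1` consists of `n`
distinct vertices `v 0, …, v (n - 1)` and `n` distinct edges `e 0, …, e (n - 1)` such that `e i`
joins `v i` and `v (i + 1)`, indices being taken modulo `n`. Thus a loop is a cycle of length `1`
and two parallel edges form a cycle of length `2`. -/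
def Graph.HasNoCycle {α β : Type} (G : Graph α β) : Prop :=
  ∀ (n : ℕ) [NeZero n] (v : Fin n → α) (e : Fin n → β),
    Function.Injective v → Function.Injective e →
      ¬ ∀ i : Fin n, G.IsLink (e i) (v i) (v (i + 1))

/-! ### Labeled graphs, patterns and canonical forests -/

/-- A simple graph whose vertices are labeled with labels in `{0, 1, …, k}`. -/
structure LGraph (k : ℕ) where
  V : Type
  G : SimpleGraph V
  lab : V → Fin (k + 1)

/-- The vectors that assign a value `0`, `1` or `2` to each label in `{0, 1, …, k}`. -/
abbrev LVec (k : ℕ) : Type := Fin (k + 1) → Fin 3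

/-- The two-sum of two vectors: coordinatewise sum capped at `2`. -/
def twoSum {k : ℕ} (u v : LVec k) : LVec k :=
  fun j => ⟨min 2 ((u j : ℕ) + (v j : ℕ)), by omega⟩

/-- Cap all multiplicities of a multiset at `2`. -/
def cap2 {α : Type} [DecidableEq α] (m : Multiset α) : Multiset α :=
  m.dedup.bind fun a => Multiset.replicate (min 2 (m.count a)) a

/-- The two-union of two multisets: the multiplicities are added and capped at `2`. -/
def twoUnion {α : Type} [DecidableEq α] (m m' : Multiset α) : Multiset α := cap2 (m + m')

/-- A pattern is a multiset of vectors in which every vector has multiplicity at most `2`, exactly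
one vector `z` (of multiplicity `1`) satisfies `z 0 = 1`, and all other vectors `v` satisfy
`v 0 = 0`. -/
def IsPattern {k : ℕ} (p : Multiset (LVec k)) : Prop :=
  (∀ v, p.count v ≤ 2) ∧
    ∃ z ∈ p, p.count z = 1 ∧ z 0 = 1 ∧ ∀ v ∈ p, v ≠ z → v 0 = 0

/-- The labels along the canonical path of a vector `v`: `v j` vertices labeled `j` for each `j`,
in increasing order. -/
def pathLabels {k : ℕ} (v : LVec k) : List (Fin (k + 1)) :=
  (List.finRange (k + 1)).flatMap fun j => List.replicate (v j : ℕ) j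

/-- The canonical forest `F_p` of a pattern `p`: one disjoint simple path for each vector of `p`
(with multiplicity), the path of `v` having exactly `v j` vertices labeled `j`. -/
noncomputable def canonForest {k : ℕ} (p : Multiset (LVec k)) : LGraph k where
  V := Σ i : Fin p.toList.length, Fin (pathLabels (p.toList.get i)).length
  G := SimpleGraph.fromRel fun a b => a.1 = b.1 ∧ a.2.val + 1 = b.2.val
  lab := fun a => (pathLabels (p.toList.get a.1)).get a.2

/-! ### Extension data and glueings -/

/-- An extension datum `d = (H₀, J, L)`: a finite simple forest `H₀` on a vertex set `W`, a
symmetric irreflexive relation `J` on the labels `{1, …, k}`, and a map `L` assigning to each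
vertex of `W` a set of labels in `{1, …, k}`. -/
structure ExtDatum (k : ℕ) where
  W : Type
  finW : Finite W
  H0 : SimpleGraph W
  H0acyc : H0.IsAcyclic
  J : Fin (k + 1) → Fin (k + 1) → Prop
  Jsymm : ∀ i j, J i j → J j i
  Jirrefl : ∀ i, ¬ J i i
  Jpos : ∀ i j, J i j → i ≠ 0 ∧ j ≠ 0
  L : W → Set (Fin (k + 1))
  Lpos : ∀ w, (0 : Fin (k + 1)) ∉ L w

/-- The edges of the glueing: the edges of `F`, the edges of `H₀`, one edge for each unordered
pair of vertices of `F` with labels related by `J`, and one edge for each pair of `w ∈ W` and a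
vertex of `F` with label in `L w`. -/
inductive GlueEdge {k : ℕ} (F : LGraph k) (d : ExtDatum k) : Type
  | ofForest (e : F.G.edgeSet)
  | ofDatum (e : d.H0.edgeSet)
  | ofJ (e : {e : Sym2 F.V // ∃ u v, e = s(u, v) ∧ d.J (F.lab u) (F.lab v)})
  | ofL (e : {e : d.W × F.V // F.lab e.2 ∈ d.L e.1})

/-- The ends of the edges of the glueing. -/
def GlueEdge.ends {k : ℕ} {F : LGraph k} {d : ExtDatum k} : GlueEdge F d → Sym2 (F.V ⊕ d.W)
  | .ofForest e => e.1.map Sum.inl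
  | .ofDatum e => e.1.map Sum.inr
  | .ofJ e => e.1.map Sum.inl
  | .ofL e => s(Sum.inr e.1.1, Sum.inl e.1.2)

/-- The glueing `Glue(F; d)`. It is a multigraph: if an edge `{u, v}` of `F` satisfies
`(lab u, lab v) ∈ J`, then `u` and `v` are joined by two parallel edges. -/
def glue {k : ℕ} (F : LGraph k) (d : ExtDatum k) : Graph (F.V ⊕ d.W) (GlueEdge F d) :=
  multigraphOfEnds GlueEdge.ends

/-! ### Fusion clique expressions and clique extensions -/

/-- An extended labeled multigraph. Its vertices are the zero-vertex `none`, the only vertex with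
label `0`, and the vertices `some v` with `v : V`, which have positive labels. -/
structure ExtGraph where
  V : Type
  E : Type
  ends : E → Sym2 (Option V)
  lab : V → ℕ+

namespace ExtGraph

/-- The underlying multigraph. -/
def graph (G : ExtGraph) : Graph (Option G.V) G.E := multigraphOfEnds G.ends

/-- The empty extended labeled graph, which has the zero-vertex only. -/
def empty : ExtGraph where
  V := Empty
  E := Empty
  ends := Empty.elim
  lab := Empty.elim

/-- A vertex labeled `i` and the zero-vertex, both isolated. -/
def single (i : ℕ+) : ExtGraph where
  V := Unit
  E := Empty
  ends := Empty.elim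
  lab := fun _ => i

/-- Change every label `i` to `j`. -/
def relabel (i j : ℕ+) (G : ExtGraph) : ExtGraph where
  V := G.V
  E := G.E
  ends := G.ends
  lab := fun v => if G.lab v = i then j else G.lab v

/-- Add an edge between each vertex labeled `i` and each vertex labeled `j`, in addition to the
edges that exist already. -/
def join (i j : ℕ+) (G : ExtGraph) : ExtGraph where
  V := G.V
  E := G.E ⊕ {e : G.V × G.V // G.lab e.1 = i ∧ G.lab e.2 = j}
  ends := Sum.elim G.ends fun e => s(some e.1.1, some e.1.2)
  lab := G.lab

/-- The disjoint union, with the two zero-vertices identified. -/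
def union (G H : ExtGraph) : ExtGraph where
  V := G.V ⊕ H.V
  E := G.E ⊕ H.E
  ends := Sum.elim (fun e => (G.ends e).map (Option.map Sum.inl))
    (fun e => (H.ends e).map (Option.map Sum.inr))
  lab := Sum.elim G.lab H.lab

end ExtGraph

/-- A labeled graph with exactly one vertex labeled `0`, seen as an extended labeled multigraph. -/
def LGraph.toExt {k : ℕ} (F : LGraph k) : ExtGraph where
  V := {v : F.V // F.lab v ≠ 0}
  E := F.G.edgeSet
  ends := fun e => e.1.map fun v => if h : F.lab v ≠ 0 then some ⟨v, h⟩ else none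
  lab := fun v => ⟨(F.lab v.1).val, Nat.pos_of_ne_zero fun h => v.2 (Fin.ext h)⟩

/-- Fusion clique expressions. -/
inductive CliqueExpr : Type
  | vertex (i : ℕ+)
  | relabel (i j : ℕ+) (hij : i ≠ j) (μ : CliqueExpr)
  | join (i j : ℕ+) (hij : i ≠ j) (μ : CliqueExpr)
  | union (μ ν : CliqueExpr)

/-- The extended labeled multigraph `G_μ` defined by a clique expression `μ`. -/
def CliqueExpr.eval : CliqueExpr → ExtGraph
  | .vertex i => .single i
  | .relabel i j _ μ => μ.eval.relabel i j
  | .join i j _ μ => μ.eval.join i j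
  | .union μ ν => μ.eval.union ν.eval

/-- Clique extensions: clique expressions with exactly one occurrence of the variable operand. -/
inductive CliqueExt : Type
  | var
  | relabel (i j : ℕ+) (hij : i ≠ j) (τ : CliqueExt)
  | join (i j : ℕ+) (hij : i ≠ j) (τ : CliqueExt)
  | unionLeft (τ : CliqueExt) (μ : CliqueExpr)
  | unionRight (μ : CliqueExpr) (τ : CliqueExt)

namespace CliqueExt

/-- The graph `G_{τ(μ)}` resulting from a clique extension `τ` when the variable is replaced by an
expression `μ` that defines the extended labeled graph `F`. -/
def eval : CliqueExt → ExtGraph → ExtGraph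
  | .var, F => F
  | .relabel i j _ τ, F => (τ.eval F).relabel i j
  | .join i j _ τ, F => (τ.eval F).join i j
  | .unionLeft τ μ, F => (τ.eval F).union μ.eval
  | .unionRight μ τ, F => μ.eval.union (τ.eval F)

/-- The graph `G_τ`, in which the variable stands for the empty extended labeled graph. -/
def graph (τ : CliqueExt) : ExtGraph := τ.eval .empty

/-- The vertices of the graph that replaces the variable, as vertices of the resulting graph. -/
def inner : (τ : CliqueExt) → (F : ExtGraph) → F.V → (τ.eval F).V
  | .var, _ => id
  | .relabel _ _ _ τ, F => τ.inner F
  | .join _ _ _ τ, F => τ.inner F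
  | .unionLeft τ _, F => Sum.inl ∘ τ.inner F
  | .unionRight _ τ, F => Sum.inr ∘ τ.inner F

/-- The vertices of `G_τ`, as vertices of the resulting graph. -/
def outer : (τ : CliqueExt) → (F : ExtGraph) → (τ.eval .empty).V → (τ.eval F).V
  | .var, _ => Empty.elim
  | .relabel _ _ _ τ, F => τ.outer F
  | .join _ _ _ τ, F => τ.outer F
  | .unionLeft τ _, F => Sum.map (τ.outer F) id
  | .unionRight _ τ, F => Sum.map id (τ.outer F)

/-- A partial solution of `G_τ` is a set of vertices that contains the zero-vertex and induces an
acyclic subgraph. -/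
def IsPartialSolution (τ : CliqueExt) (S : Set (Option τ.graph.V)) : Prop :=
  none ∈ S ∧ (τ.graph.graph.induce S).HasNoCycle

/-- `F` is compatible with the partial solution `S` under `τ` if the vertices of `F` and `S`
together induce an acyclic subgraph of the graph obtained by replacing the variable of `τ`
by `F`. -/
def Compatible (τ : CliqueExt) (S : Set (Option τ.graph.V)) (F : ExtGraph) : Prop :=
  ((τ.eval F).graph.induce
    (Set.range (Option.map (τ.inner F)) ∪ Option.map (τ.outer F) '' S)).HasNoCycle

end CliqueExt

/-- Two families of patterns are equivalent if, for each clique extension and each partial solution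
of it, the numbers of patterns in the two families whose canonical forests are compatible with the
partial solution are congruent modulo `2`. -/
def PatternsEquiv {k : ℕ} (P Q : Finset (Multiset (LVec k))) : Prop :=
  ∀ (τ : CliqueExt) (S : Set (Option τ.graph.V)), τ.IsPartialSolution S →
    {p | p ∈ P ∧ τ.Compatible S (canonForest p).toExt}.ncard ≡
      {p | p ∈ Q ∧ τ.Compatible S (canonForest p).toExt}.ncard [MOD 2]

/-! ### Acyclicity as surjectivity of the coboundary map -/

/-- The multigraph on `N` in which `x` and `y` are joined by `M x y` edges becomes acyclic when
vertices with the same image under `φ` are identified. This is expressed by the absence of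
parallel edges and the surjectivity, modulo `2`, of the coboundary map on the cochains that factor
through `φ`. -/
def IsForestAlong {N N' : Type} (M : N → N → ℕ) (φ : N → N') : Prop :=
  (∀ x y, M x y ≤ 1) ∧ ∀ h : Sym2 N → ZMod 2, ∃ g : N' → ZMod 2,
    ∀ x y, M x y ≠ 0 → g (φ x) + g (φ y) = h s(x, y)

theorem zmod_two_add_self (a : ZMod 2) : a + a = 0 := CharTwo.add_self_eq_zero a

/-- In an acyclic multigraph every edge `e` is a bridge, so some set of vertices, given by its
indicator function, is crossed by `e` and by no other edge. -/
theorem Graph.HasNoCycle.exists_cut {α β : Type} {G : Graph α β} (hG : G.HasNoCycle) {e : β}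
    {x y : α} (he : G.IsLink e x y) :
    ∃ f : α → ZMod 2, f x + f y = 1 ∧ ∀ e' u v, e' ≠ e → G.IsLink e' u v → f u + f v = 0 := by
  classical
  let H : SimpleGraph α :=
    { Adj := fun u v => u ≠ v ∧ ∃ e', e' ≠ e ∧ G.IsLink e' u v
      symm := ⟨fun u v ⟨h, e', h1, h2⟩ => ⟨h.symm, e', h1, h2.symm⟩⟩
      loopless := ⟨fun u h => h.1 rfl⟩ }
  have hxy : ¬ H.Reachable x y := by
    intro hr
    obtain ⟨p, hp⟩ := hr.exists_isPath
    have hadj : ∀ i : ℕ, i < p.length →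
        ∃ e', e' ≠ e ∧ G.IsLink e' (p.getVert i) (p.getVert (i + 1)) :=
      fun i hi => (p.adj_getVert_succ hi).2
    choose c hc1 hc2 using hadj
    have hinj : ∀ i j : ℕ, i ≤ p.length → j ≤ p.length → p.getVert i = p.getVert j → i = j :=
      fun i j hi hj h => hp.getVert_injOn hi hj h
    refine hG (p.length + 1) (fun i => p.getVert i)
      (fun i => if h : (i : ℕ) < p.length then c i h else e) ?_ ?_ ?_
    · intro i j h
      exact Fin.ext (hinj i j (by omega) (by omega) h)
    · intro i j h
      simp only at h
      split_ifs at h with h1 h2 h2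
      · have l1 := hc2 _ h1
        rw [h] at l1
        rcases l1.eq_and_eq_or_eq_and_eq (hc2 _ h2) with h3 | h3
        · exact Fin.ext (hinj _ _ (by omega) (by omega) h3.1)
        · have := hinj _ _ (by omega) (by omega) h3.1
          have := hinj _ _ (by omega) (by omega) h3.2
          omega
      · exact absurd h (hc1 _ h1)
      · exact absurd h.symm (hc1 _ h2)
      · exact Fin.ext (by omega)
    · intro i
      by_cases h1 : (i : ℕ) < p.length
      · have : ((i + 1 : Fin (p.length + 1)) : ℕ) = i + 1 := by
          rw [Fin.val_add_one_of_lt]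
          exact h1
        simp only [h1, dif_pos, this]
        exact hc2 _ h1
      · have h2 : i = Fin.last _ := Fin.ext (by simp; omega)
        subst h2
        simp only [Fin.val_last, lt_self_iff_false, dif_neg, not_false_eq_true,
          Fin.last_add_one, Fin.val_zero, SimpleGraph.Walk.getVert_zero, SimpleGraph.Walk.getVert_length]
        exact he.symm
  refine ⟨fun u => if H.Reachable x u then 1 else 0, ?_, ?_⟩
  · simp [hxy]
  · intro e' u v hne hl
    have : H.Reachable x u ↔ H.Reachable x v := by
      by_cases huv : u = v
      · rw [huv]
      · have ha : H.Adj u v := ⟨huv, e', hne, hl⟩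
        exact ⟨fun h => h.trans ha.reachable, fun h => h.trans ha.symm.reachable⟩
    simp only [this]
    exact zmod_two_add_self _

/-- A finite multigraph is acyclic if and only if its multiplicity function is that of a forest. -/
theorem Graph.hasNoCycle_iff_isForestAlong {α β N : Type} [Finite β] [Finite N] (G : Graph α β)
    (ι : N → α) (hι : Function.Injective ι) (hr : ∀ e x y, G.IsLink e x y → x ∈ Set.range ι) :
    G.HasNoCycle ↔ IsForestAlong (fun x y => Nat.card {e // G.IsLink e (ι x) (ι y)}) id := by
  classical
  constructor
  · intro hG
    have hle : ∀ x y, Nat.card {e // G.IsLink e (ι x) (ι y)} ≤ 1 := by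
      intro x y
      rw [Finite.card_le_one_iff_subsingleton]
      refine ⟨fun ⟨e, he⟩ ⟨e', he'⟩ => ?_⟩
      by_contra hne
      obtain ⟨f, h1, h2⟩ := hG.exists_cut he
      have := h2 e' _ _ (fun h => hne (Subtype.ext h.symm)) he'
      rw [h1] at this
      exact one_ne_zero this
    refine ⟨hle, fun h => ?_⟩
    have hcut : ∀ s : Sym2 N, ∃ f : N → ZMod 2, ∀ x y, Nat.card {e // G.IsLink e (ι x) (ι y)} ≠ 0 →
        f x + f y = if s(x, y) = s then 1 else 0 := by
      intro s
      induction s using Sym2.ind with | _ a b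
      by_cases hab : ∃ e, G.IsLink e (ι a) (ι b)
      · obtain ⟨e, he⟩ := hab
        obtain ⟨f, h1, h2⟩ := hG.exists_cut he
        refine ⟨f ∘ ι, fun x y hxy => ?_⟩
        split_ifs with hs
        · rcases Sym2.eq_iff.1 hs with ⟨rfl, rfl⟩ | ⟨rfl, rfl⟩
          · exact h1
          · rw [add_comm]; exact h1
        · obtain ⟨⟨⟨e', he'⟩⟩, -⟩ := Nat.card_ne_zero.1 hxy
          refine h2 e' _ _ ?_ he'
          rintro rfl
          refine hs (Sym2.eq_iff.2 ?_)
          rcases he'.eq_and_eq_or_eq_and_eq he with h3 | h3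
          · exact Or.inl ⟨hι h3.1, hι h3.2⟩
          · exact Or.inr ⟨hι h3.1, hι h3.2⟩
      · refine ⟨0, fun x y hxy => ?_⟩
        obtain ⟨⟨⟨e', he'⟩⟩, -⟩ := Nat.card_ne_zero.1 hxy
        rw [if_neg]
        · simp
        intro hs
        rcases Sym2.eq_iff.1 hs with ⟨rfl, rfl⟩ | ⟨rfl, rfl⟩
        · exact hab ⟨e', he'⟩
        · exact hab ⟨e', he'.symm⟩
    choose f hf using hcut
    have := Fintype.ofFinite N
    refine ⟨fun x => ∑ s : Sym2 N, h s * f s x, fun x y hxy => ?_⟩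
    simp only [id, ← Finset.sum_add_distrib, ← mul_add, hf _ x y hxy]
    simp
  · rintro ⟨hle, hsurj⟩ n _ v e hv he hl
    choose u hu using fun i => hr _ _ _ (hl i)
    obtain ⟨g, hg⟩ := hsurj fun s => if s = s(u 0, u (0 + 1)) then 1 else 0
    have hl' : ∀ i, G.IsLink (e i) (ι (u i)) (ι (u (i + 1))) := fun i => by
      rw [hu, hu]; exact hl i
    have hterm : ∀ i, g (u i) + g (u (i + 1)) = if i = 0 then 1 else 0 := by
      intro i
      have hne : Nat.card {e // G.IsLink e (ι (u i)) (ι (u (i + 1)))} ≠ 0 :=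
        Nat.card_ne_zero.2 ⟨⟨⟨e i, hl' i⟩⟩, inferInstance⟩
      refine (hg _ _ hne).trans ?_
      congr 1
      refine propext ⟨fun hs => ?_, fun h => by rw [h]⟩
      have hl0 : G.IsLink (e 0) (ι (u i)) (ι (u (i + 1))) := by
        rcases Sym2.eq_iff.1 hs with ⟨h1, h2⟩ | ⟨h1, h2⟩
        · rw [h1, h2]; exact hl' 0
        · rw [h1, h2]; exact (hl' 0).symm
      have := Finite.card_le_one_iff_subsingleton.1 (hle (u i) (u (i + 1)))
      exact he (congrArg Subtype.val (Subsingleton.elim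
        (⟨e i, hl' i⟩ : {e // G.IsLink e (ι (u i)) (ι (u (i + 1)))}) ⟨e 0, hl0⟩))
    have hsum : ∑ i, (g (u i) + g (u (i + 1))) = 1 := by
      simp [hterm]
    have hshift : ∑ i, g (u (i + 1)) = ∑ i, g (u i) :=
      Equiv.sum_comp (Equiv.addRight (1 : Fin n)) fun i => g (u i)
    rw [Finset.sum_add_distrib, hshift, zmod_two_add_self] at hsum
    exact zero_ne_one hsum

/-! ### Contraction, identification and change of the multiplicities -/

/-- The multiplicities that arise when vertices with the same image under `φ` are identified. -/
def pushMult {N N' : Type} [Fintype N] [DecidableEq N'] (φ : N → N') (M : N → N → ℕ) :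
    N' → N' → ℕ :=
  fun x y => ∑ u, ∑ v, if φ u = x ∧ φ v = y then M u v else 0

theorem IsForestAlong.congr {N N' : Type} {M M' : N → N → ℕ} {φ : N → N'}
    (h : ∀ x y, min 2 (M x y) = min 2 (M' x y)) (hM : IsForestAlong M φ) :
    IsForestAlong M' φ := by
  refine ⟨fun x y => ?_, fun k => ?_⟩
  · have := h x y
    have := hM.1 x y
    omega
  · obtain ⟨g, hg⟩ := hM.2 k
    refine ⟨g, fun x y hxy => hg x y ?_⟩
    have := h x y
    omega

theorem isForestAlong_congr {N N' : Type} {M M' : N → N → ℕ} {φ : N → N'}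
    (h : ∀ x y, min 2 (M x y) = min 2 (M' x y)) :
    IsForestAlong M φ ↔ IsForestAlong M' φ :=
  ⟨fun H => H.congr h, fun H => H.congr fun x y => (h x y).symm⟩

theorem IsForestAlong.comap {N N' : Type} {M : N → N → ℕ} (ι : N' → N)
    (hι : Function.Injective ι) (hM : IsForestAlong M id) :
    IsForestAlong (fun x y => M (ι x) (ι y)) id := by
  refine ⟨fun x y => hM.1 _ _, fun h => ?_⟩
  obtain ⟨g, hg⟩ := hM.2 (Function.extend (Sym2.map ι) h 0)
  refine ⟨g ∘ ι, fun x y hxy => (hg _ _ hxy).trans ?_⟩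
  have := (Sym2.map.injective hι).extend_apply h 0 s(x, y)
  simpa using this

theorem isForestAlong_comap_equiv {N N' : Type} {M : N → N → ℕ} (ι : N' ≃ N) :
    IsForestAlong (fun x y => M (ι x) (ι y)) id ↔ IsForestAlong M id := by
  refine ⟨fun h => ?_, fun h => h.comap ι ι.injective⟩
  simpa using h.comap ι.symm ι.symm.injective

theorem isForestAlong_pushMult {N N' N'' : Type} [Fintype N] [DecidableEq N'] {M : N → N → ℕ}
    (hs : ∀ x y, M x y = M y x) (φ : N → N') (ψ : N' → N'') :
    IsForestAlong (pushMult φ M) ψ ↔ IsForestAlong M (ψ ∘ φ) := by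
  classical
  have hpush : ∀ x y, pushMult φ M x y =
      ∑ p : N × N, if φ p.1 = x ∧ φ p.2 = y then M p.1 p.2 else 0 := fun x y => by
    rw [Fintype.sum_prod_type]; rfl
  constructor
  · rintro ⟨hle, hsurj⟩
    have hM : ∀ u v, M u v ≤ pushMult φ M (φ u) (φ v) := fun u v => by
      rw [hpush]
      refine le_trans ?_ (Finset.single_le_sum (fun _ _ => Nat.zero_le _)
        (Finset.mem_univ (u, v)))
      simp
    have huniq : ∀ u v u' v', M u v ≠ 0 → M u' v' ≠ 0 → φ u = φ u' → φ v = φ v' →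
        (u, v) = (u', v') := by
      intro u v u' v' h h' h1 h2
      by_contra hne
      have h3 := hle (φ u) (φ v)
      rw [hpush] at h3
      have h4 := Finset.add_le_sum (f := fun p : N × N =>
        if φ p.1 = φ u ∧ φ p.2 = φ v then M p.1 p.2 else 0) (fun _ _ => Nat.zero_le _)
        (Finset.mem_univ (u, v)) (Finset.mem_univ (u', v')) hne
      simp only [h1, h2, and_self, if_true] at h3 h4
      omega
    refine ⟨fun u v => (hM u v).trans (hle _ _), fun h => ?_⟩
    have hex : ∀ e : Sym2 N', ∃ b : ZMod 2, ∀ u v, M u v ≠ 0 → s(φ u, φ v) = e →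
        b = h s(u, v) := by
      intro e
      by_cases he : ∃ u v, M u v ≠ 0 ∧ s(φ u, φ v) = e
      · obtain ⟨u, v, huv, rfl⟩ := he
        refine ⟨h s(u, v), fun u' v' h' hs' => ?_⟩
        rcases Sym2.eq_iff.1 hs' with ⟨h1, h2⟩ | ⟨h1, h2⟩
        · have := huniq u' v' u v h' huv h1 h2
          rw [Prod.mk.injEq] at this
          rw [this.1, this.2]
        · have := huniq u' v' v u h' (by rwa [hs]) h1 h2
          rw [Prod.mk.injEq] at this
          rw [this.1, this.2, Sym2.eq_swap]
      · exact ⟨0, fun u v h1 h2 => absurd ⟨u, v, h1, h2⟩ he⟩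
    choose b hb using hex
    obtain ⟨g, hg⟩ := hsurj b
    refine ⟨g, fun u v huv => ?_⟩
    have := hM u v
    exact (hg (φ u) (φ v) (by omega)).trans (hb _ u v huv rfl)
  · rintro ⟨hle, hsurj⟩
    refine ⟨fun x y => ?_, fun h => ?_⟩
    · by_contra hgt
      rw [hpush] at hgt
      have hex : ∃ p : N × N, (if φ p.1 = x ∧ φ p.2 = y then M p.1 p.2 else 0) ≠ 0 := by
        by_contra hno
        push Not at hno
        simp [hno] at hgt
      obtain ⟨⟨u, v⟩, huv⟩ := hex
      have huv' : (φ u = x ∧ φ v = y) ∧ M u v ≠ 0 := by simpa [and_assoc] using huv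
      obtain ⟨⟨rfl, rfl⟩, huv'⟩ := huv'
      obtain ⟨g, hg⟩ := hsurj fun s => if s = s(u, v) then 1 else 0
      have h1 := hg u v huv'
      rw [if_pos rfl] at h1
      rw [Finset.sum_eq_single (u, v)] at hgt
      · simp only [and_self, if_true] at hgt
        exact hgt (hle u v)
      · rintro ⟨u', v'⟩ - hne
        by_contra hne'
        have h' : (φ u' = φ u ∧ φ v' = φ v) ∧ M u' v' ≠ 0 := by simpa [and_assoc] using hne'
        have h2 := hg u' v' h'.2
        simp only [Function.comp, h'.1.1, h'.1.2] at h1 h2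
        rw [h1] at h2
        split_ifs at h2 with hs'
        · rcases Sym2.eq_iff.1 hs' with ⟨rfl, rfl⟩ | ⟨rfl, rfl⟩
          · exact hne rfl
          · rw [h'.1.1, zmod_two_add_self] at h1
            exact zero_ne_one h1
        · exact one_ne_zero h2
      · simp
    · obtain ⟨g, hg⟩ := hsurj (h ∘ Sym2.map φ)
      refine ⟨g, fun x y hxy => ?_⟩
      rw [hpush] at hxy
      obtain ⟨⟨u, v⟩, -, huv⟩ := Finset.exists_ne_zero_of_sum_ne_zero hxy
      have huv' : (φ u = x ∧ φ v = y) ∧ M u v ≠ 0 := by simpa [and_assoc] using huv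
      obtain ⟨⟨rfl, rfl⟩, huv'⟩ := huv'
      simpa using hg u v huv'

/-- Contraction of the components, given by the fibres of `π`, of a forest with adjacency `A`. -/
theorem isForestAlong_add_forest {N N' : Type} {A : N → N → Prop} [DecidableRel A]
    (hA : ∀ x y, A x y → A y x) {M : N → N → ℕ} (π : N → N') (hπ : ∀ x y, A x y → π x = π y)
    (hfac : ∀ f : N → ZMod 2, (∀ x y, A x y → f x = f y) → ∃ g : N' → ZMod 2, ∀ x, f x = g (π x))
    (hsurj : ∀ h : Sym2 N → ZMod 2, ∃ f : N → ZMod 2, ∀ x y, A x y → f x + f y = h s(x, y)) :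
    IsForestAlong (fun x y => (if A x y then 1 else 0) + M x y) id ↔ IsForestAlong M π := by
  constructor
  · rintro ⟨hle, hs⟩
    refine ⟨fun x y => (Nat.le_add_left _ _).trans (hle x y), fun h => ?_⟩
    obtain ⟨f, hf⟩ := hs (Sym2.lift ⟨fun x y => if A x y then 0 else h s(x, y), fun x y => by
      simp only [Sym2.eq_swap (a := x), show A x y ↔ A y x from ⟨hA x y, hA y x⟩]⟩)
    simp only [Sym2.lift_mk, id] at hf
    obtain ⟨g, hg⟩ := hfac f fun x y hxy => by
      have := hf x y (by simp [hxy])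
      rw [if_pos hxy] at this
      exact CharTwo.add_eq_zero.1 this
    refine ⟨g, fun x y hxy => ?_⟩
    rw [← hg, ← hg, hf x y (by omega), if_neg]
    intro hA'
    have := hle x y
    simp only [hA', if_true] at this
    omega
  · rintro ⟨hle, hs⟩
    have hdisj : ∀ x y, A x y → M x y = 0 := by
      intro x y hxy
      by_contra hne
      obtain ⟨g, hg⟩ := hs fun _ => 1
      have := hg x y hne
      rw [hπ x y hxy, zmod_two_add_self] at this
      exact zero_ne_one this
    refine ⟨fun x y => ?_, fun h => ?_⟩
    · by_cases hxy : A x y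
      · simp [hxy, hdisj x y hxy]
      · simpa [hxy] using hle x y
    · obtain ⟨f, hf⟩ := hsurj h
      obtain ⟨g, hg⟩ := hs (fun s => h s + Sym2.lift ⟨fun x y => f x + f y, fun x y =>
        add_comm _ _⟩ s)
      simp only [Sym2.lift_mk] at hg
      refine ⟨fun x => f x + g (π x), fun x y hxy => ?_⟩
      simp only [id]
      by_cases hA' : A x y
      · rw [hπ x y hA', ← hf x y hA', add_add_add_comm, zmod_two_add_self, add_zero]
      · simp only [hA', if_false, zero_add] at hxy
        rw [add_add_add_comm, hg x y hxy, add_left_comm, zmod_two_add_self, add_zero]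

/-- If a forest has two vertices with the same neighbourhood, it remains a forest when
a third such vertex is added. -/
theorem IsForestAlong.add_twin {N : Type} {M : N → N → ℕ} (hs : ∀ x y, M x y = M y x) {t t' : N}
    (hne : t ≠ t') (htw : ∀ x, M t x = M t' x) (hM : IsForestAlong M id) :
    IsForestAlong (fun x y : Option N => M (x.getD t) (y.getD t)) id := by
  classical
  have hloop : ∀ x, M x x = 0 := by
    intro x
    by_contra hx
    obtain ⟨g, hg⟩ := hM.2 fun _ => 1
    have := hg x x hx
    rw [zmod_two_add_self] at this
    exact zero_ne_one this
  have htt' : M t t' = 0 := by rw [htw]; exact hloop t'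
  have huniq : ∀ y z, M t y ≠ 0 → M t z ≠ 0 → z = y := by
    intro y z hy hz
    by_contra hyz
    obtain ⟨g, hg⟩ := hM.2 fun s => if s = s(t, y) then 1 else 0
    have hty : t ≠ y := fun h => hy (h ▸ hloop t)
    have ht'y : t' ≠ y := fun h => hy (h ▸ htt')
    have h1 := hg t y hy
    have h2 := hg t z hz
    have h3 := hg t' y (by rwa [← htw])
    have h4 := hg t' z (by rwa [← htw])
    rw [if_pos rfl] at h1
    rw [if_neg (by simp [hyz, hty])] at h2
    rw [if_neg (by simp [hne.symm, ht'y])] at h3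
    rw [if_neg (by simp [hne.symm, ht'y])] at h4
    simp only [id, CharTwo.add_eq_zero] at h1 h2 h3 h4
    rw [h2, ← h4, h3, zmod_two_add_self] at h1
    exact zero_ne_one h1
  refine ⟨fun x y => hM.1 _ _, fun h => ?_⟩
  obtain ⟨g, hg⟩ := hM.2 (h ∘ Sym2.map some)
  have hval : ∃ b : ZMod 2, ∀ y, M t y ≠ 0 → b + g y = h s(none, some y) := by
    by_cases hy : ∃ y, M t y ≠ 0
    · obtain ⟨y, hy⟩ := hy
      refine ⟨h s(none, some y) + g y, fun z hz => ?_⟩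
      rw [huniq y z hy hz, add_assoc, zmod_two_add_self, add_zero]
    · exact ⟨0, fun y h => absurd ⟨y, h⟩ hy⟩
  obtain ⟨b, hb⟩ := hval
  refine ⟨fun x => x.elim b g, ?_⟩
  rintro (_ | x) (_ | y) hxy
  · exact absurd (hloop t) hxy
  · exact hb y hxy
  · have := hb x (by rw [hs]; exact hxy)
    rw [Sym2.eq_swap, ← this]
    exact add_comm _ _
  · exact hg x y hxy

theorem isForestAlong_add_twin {N : Type} {M : N → N → ℕ} (hs : ∀ x y, M x y = M y x) {t t' : N}
    (hne : t ≠ t') (htw : ∀ x, M t x = M t' x) :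
    IsForestAlong (fun x y : Option N => M (x.getD t) (y.getD t)) id ↔ IsForestAlong M id :=
  ⟨fun h => h.comap some (Option.some_injective _), fun h => h.add_twin hs hne htw⟩

/-! ### The parity argument -/

theorem zmod_two_exists_combination : ∀ F G p q w : ZMod 2, ∃ x y z : ZMod 2,
    F + (x * (p + 1) + y * q + z) = 0 ∧ G + (x * p + y + z * w) = 0 := by
  decide

/-- Among the three graphs obtained by identifying two of the three vertices `a`, `b`, `c` and the
graph obtained by identifying all of them, an even number is acyclic: the last one is acyclic if
and only if the first three are, and not exactly one of the first three is. -/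
theorem even_isForest_identifications {N : Type} (M : N → N → ℕ) {a b c : N} (hab : a ≠ b)
    (hac : a ≠ c) (hbc : b ≠ c) {P₁ P₂ P₃ P₄ : Prop}
    (h₁ : P₁ ↔ (∀ x y, M x y ≤ 1) ∧ ∀ h : Sym2 N → ZMod 2, ∃ f : N → ZMod 2, f b = f c ∧
      ∀ x y, M x y ≠ 0 → f x + f y = h s(x, y))
    (h₂ : P₂ ↔ (∀ x y, M x y ≤ 1) ∧ ∀ h : Sym2 N → ZMod 2, ∃ f : N → ZMod 2, f a = f c ∧
      ∀ x y, M x y ≠ 0 → f x + f y = h s(x, y))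
    (h₃ : P₃ ↔ (∀ x y, M x y ≤ 1) ∧ ∀ h : Sym2 N → ZMod 2, ∃ f : N → ZMod 2, f a = f b ∧
      ∀ x y, M x y ≠ 0 → f x + f y = h s(x, y))
    (h₄ : P₄ ↔ (∀ x y, M x y ≤ 1) ∧ ∀ h : Sym2 N → ZMod 2, ∃ f : N → ZMod 2,
      (f a = f b ∧ f a = f c) ∧ ∀ x y, M x y ≠ 0 → f x + f y = h s(x, y)) :
    (P₄ ↔ P₁ ∧ P₂ ∧ P₃) ∧ (P₁ → P₂ ∨ P₃) ∧ (P₂ → P₁ ∨ P₃) ∧ (P₃ → P₁ ∨ P₂) := by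
  classical
  by_cases hle : ∀ x y, M x y ≤ 1
  swap
  · simp only [h₁, h₂, h₃, h₄, hle, false_and, and_self, or_self, imp_self]
  by_cases hsurj : ∀ h : Sym2 N → ZMod 2, ∃ f : N → ZMod 2, ∀ x y, M x y ≠ 0 → f x + f y = h s(x, y)
  swap
  · have key : ∀ Q : (N → ZMod 2) → Prop, ¬ ∀ h : Sym2 N → ZMod 2, ∃ f : N → ZMod 2, Q f ∧
        ∀ x y, M x y ≠ 0 → f x + f y = h s(x, y) := fun Q hQ =>
      hsurj fun h => let ⟨f, hf⟩ := hQ h; ⟨f, hf.2⟩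
    have k₁ := key fun f => f b = f c
    have k₂ := key fun f => f a = f c
    have k₃ := key fun f => f a = f b
    have k₄ := key fun f => f a = f b ∧ f a = f c
    simp only [h₁, h₂, h₃, h₄, k₁, k₂, k₃, k₄, and_false, and_self, or_self, imp_self]
  let K (f : N → ZMod 2) : Prop := ∀ x y, M x y ≠ 0 → f x + f y = 0
  have hpair : ∀ u v, u ≠ v → ((∀ h : Sym2 N → ZMod 2, ∃ f : N → ZMod 2, f u = f v ∧
      ∀ x y, M x y ≠ 0 → f x + f y = h s(x, y)) ↔ ∃ f, K f ∧ f u + f v = 1) := by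
    intro u v huv
    constructor
    · intro H
      obtain ⟨f, hf1, hf2⟩ := H (Sym2.lift ⟨fun x y => (Pi.single u 1 : N → ZMod 2) x +
        (Pi.single u 1 : N → ZMod 2) y, fun x y => add_comm _ _⟩)
      refine ⟨f + Pi.single u 1, fun x y hxy => ?_, ?_⟩
      · simp only [Pi.add_apply]
        rw [add_add_add_comm, hf2 x y hxy, Sym2.lift_mk, zmod_two_add_self]
      · simp only [Pi.add_apply]
        rw [add_add_add_comm, hf1, zmod_two_add_self]
        simp [huv.symm]
    · rintro ⟨k, hk, hk1⟩ h
      obtain ⟨f, hf⟩ := hsurj h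
      by_cases hfe : f u = f v
      · exact ⟨f, hfe, hf⟩
      · refine ⟨f + k, ?_, fun x y hxy => ?_⟩
        · have : ∀ p q r s : ZMod 2, p ≠ q → r + s = 1 → p + r = q + s := by decide
          exact this _ _ _ _ hfe hk1
        · simp only [Pi.add_apply]
          rw [add_add_add_comm, hf x y hxy, hk x y hxy, add_zero]
  have h4 : (∀ h : Sym2 N → ZMod 2, ∃ f : N → ZMod 2, (f a = f b ∧ f a = f c) ∧
      ∀ x y, M x y ≠ 0 → f x + f y = h s(x, y)) ↔
      (∃ f, K f ∧ f b + f c = 1) ∧ (∃ f, K f ∧ f a + f c = 1) ∧ ∃ f, K f ∧ f a + f b = 1 := by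
    constructor
    · intro H
      rw [← hpair b c hbc, ← hpair a c hac, ← hpair a b hab]
      refine ⟨fun h => ?_, fun h => ?_, fun h => ?_⟩ <;> obtain ⟨f, hf, hf'⟩ := H h
      · exact ⟨f, hf.1.symm.trans hf.2, hf'⟩
      · exact ⟨f, hf.2, hf'⟩
      · exact ⟨f, hf.1, hf'⟩
    · rintro ⟨⟨r, hr, hr1⟩, ⟨s, hs, hs1⟩, ⟨t, ht, ht1⟩⟩ h
      obtain ⟨f, hf⟩ := hsurj h
      obtain ⟨x, y, z, h1, h2⟩ := zmod_two_exists_combination (f a + f b) (f a + f c) (r a + r c)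
        (s a + s b) (t a + t c)
      have hrb : r b = r c + 1 := by rw [← hr1, add_left_comm, zmod_two_add_self, add_zero]
      refine ⟨fun u => f u + (x * r u + y * s u + z * t u), ⟨?_, ?_⟩, fun u v huv => ?_⟩
      · rw [← CharTwo.add_eq_zero]
        linear_combination h1 + z * ht1 + x * hrb
      · rw [← CharTwo.add_eq_zero]
        linear_combination h2 + y * hs1
      · linear_combination hf u v huv + x * hr u v huv + y * hs u v huv + z * ht u v huv
  have htri : ∀ p q r : ZMod 2, q + r = 1 → p + r = 1 ∨ p + q = 1 := by decide
  simp only [h₁, h₂, h₃, h₄, hle, implies_true, true_and, h4, hpair b c hbc, hpair a c hac,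
    hpair a b hab]
  refine ⟨?_, ?_, ?_⟩
  · rintro ⟨f, hf, h1⟩
    exact (htri (f a) _ _ h1).imp (fun h => ⟨f, hf, h⟩) fun h => ⟨f, hf, h⟩
  · rintro ⟨f, hf, h1⟩
    exact (htri (f b) _ _ h1).imp (fun h => ⟨f, hf, h⟩) fun h => ⟨f, hf, by rwa [add_comm]⟩
  · rintro ⟨f, hf, h1⟩
    exact (htri (f c) _ _ h1).imp (fun h => ⟨f, hf, by rwa [add_comm]⟩)
      fun h => ⟨f, hf, by rwa [add_comm]⟩

/-! ### Components of a labeled forest in fixed surroundings -/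

/-- Numerical surroundings of a labeled forest: the numbers of edges added between vertices with
given labels, between outer vertices and vertices with given labels, and between outer
vertices. -/
structure Surroundings (k : ℕ) where
  W : Type
  finW : Finite W
  J : Fin (k + 1) → Fin (k + 1) → ℕ
  Jsymm : ∀ a b, J a b = J b a
  L : W → Fin (k + 1) → ℕ
  H : W → W → ℕ
  Hsymm : ∀ w w', H w w' = H w' w

namespace Surroundings

variable {k : ℕ} (D : Surroundings k) {T T' : Type}

/-- The multiplicities of the edges between the components `t : T`, which have `c t a` vertices
labeled `a`, and the outer vertices. -/
def mult (c : T → Fin (k + 1) → ℕ) : T ⊕ D.W → T ⊕ D.W → ℕ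
  | .inl t, .inl t' => ∑ a, ∑ b, c t a * c t' b * D.J a b
  | .inl t, .inr w => ∑ a, c t a * D.L w a
  | .inr w, .inl t => ∑ a, c t a * D.L w a
  | .inr w, .inr w' => D.H w w'

theorem mult_symm (c : T → Fin (k + 1) → ℕ) (x y : T ⊕ D.W) : D.mult c x y = D.mult c y x := by
  rcases x with t | w <;> rcases y with t' | w'
  · simp only [mult]
    rw [Finset.sum_comm]
    refine Finset.sum_congr rfl fun a _ => Finset.sum_congr rfl fun b _ => ?_
    rw [D.Jsymm, mul_comm (c t b)]
  · rfl
  · rfl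
  · exact D.Hsymm _ _

/-- Components with the given numbers of labeled vertices form a forest with the surroundings. -/
def Forest (c : T → Fin (k + 1) → ℕ) : Prop := IsForestAlong (D.mult c) id

theorem pushMult_mult [Fintype T] [DecidableEq T'] [Fintype D.W] [DecidableEq D.W] (φ : T → T')
    {c : T → Fin (k + 1) → ℕ} {c' : T' → Fin (k + 1) → ℕ}
    (hc : ∀ t' a, c' t' a = ∑ t, if φ t = t' then c t a else 0) :
    pushMult (Sum.map φ id) (D.mult c) = D.mult c' := by
  have hL : ∀ x w, (∑ t, if φ t = x then ∑ a, c t a * D.L w a else 0) =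
      ∑ a, c' x a * D.L w a := by
    intro x w
    simp only [hc, Finset.sum_mul]
    rw [Finset.sum_comm]
    refine Finset.sum_congr rfl fun t _ => ?_
    split_ifs <;> simp
  funext x y
  rcases x with x | w <;> rcases y with y | w'
  · have h1 : pushMult (Sum.map φ id) (D.mult c) (.inl x) (.inl y) =
        ∑ p : T × T, ∑ q : Fin (k + 1) × Fin (k + 1),
          (if φ p.1 = x then c p.1 q.1 else 0) * (if φ p.2 = y then c p.2 q.2 else 0) *
            D.J q.1 q.2 := by
      simp only [pushMult, Fintype.sum_sum_type, Sum.map_inl, Sum.map_inr, Sum.inl.injEq, mult,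
        reduceCtorEq, false_and, and_false, if_false, Finset.sum_const_zero, add_zero,
        Fintype.sum_prod_type]
      refine Finset.sum_congr rfl fun t _ => Finset.sum_congr rfl fun t' _ => ?_
      by_cases h : φ t = x <;> by_cases h' : φ t' = y <;> simp [h, h']
    rw [h1, Finset.sum_comm, Fintype.sum_prod_type]
    refine Finset.sum_congr rfl fun a _ => Finset.sum_congr rfl fun b _ => ?_
    rw [hc, hc, Finset.sum_mul_sum, Finset.sum_mul, Fintype.sum_prod_type]
    simp only [Finset.sum_mul]
  · simpa [pushMult, mult, ite_and] using hL x w'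
  · simpa [pushMult, mult, ite_and] using hL y w
  · simp [pushMult, mult, ite_and]

theorem isForestAlong_mult [Fintype T] (φ : T → T') {T'' : Type} (ψ : T' ⊕ D.W → T'')
    [DecidableEq T']
    {c : T → Fin (k + 1) → ℕ} {c' : T' → Fin (k + 1) → ℕ}
    (hc : ∀ t' a, c' t' a = ∑ t, if φ t = t' then c t a else 0) :
    IsForestAlong (D.mult c') ψ ↔ IsForestAlong (D.mult c) (ψ ∘ Sum.map φ id) := by
  classical
  have := D.finW
  have := Fintype.ofFinite D.W
  rw [← isForestAlong_pushMult (D.mult_symm c), D.pushMult_mult φ hc]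

theorem forest_comp_equiv (e : T ≃ T') (c : T' → Fin (k + 1) → ℕ) :
    D.Forest (c ∘ e) ↔ D.Forest c := by
  rw [Forest, Forest, ← isForestAlong_comap_equiv (e.sumCongr (Equiv.refl D.W))]
  refine isForestAlong_congr fun x y => ?_
  rcases x with x | w <;> rcases y with y | w' <;> rfl

end Surroundings

/-! ### Truncation at two -/

theorem min_two_add {a b c d : ℕ} (h : min 2 a = min 2 b) (h' : min 2 c = min 2 d) :
    min 2 (a + c) = min 2 (b + d) := by omega

theorem min_two_mul {a b c d : ℕ} (h : min 2 a = min 2 b) (h' : min 2 c = min 2 d) :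
    min 2 (a * c) = min 2 (b * d) := by
  have key : ∀ a c : ℕ, min 2 (a * c) = min 2 (min 2 a * min 2 c) := by
    intro a c
    rcases a with _ | _ | a <;> rcases c with _ | _ | c <;>
      (simp [min_def, Nat.add_mul, Nat.mul_add]; try omega)
  rw [key a, key b, h, h']

theorem min_two_sum {ι : Type} (s : Finset ι) {f g : ι → ℕ} (h : ∀ i, min 2 (f i) = min 2 (g i)) :
    min 2 (∑ i ∈ s, f i) = min 2 (∑ i ∈ s, g i) := by
  classical
  induction s using Finset.induction_on with
  | empty => rfl
  | insert i s hi ih => rw [Finset.sum_insert hi, Finset.sum_insert hi]; exact min_two_add (h i) ih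

namespace Surroundings

variable {k : ℕ} (D : Surroundings k) {T T' : Type}

theorem forest_congr {c c' : T → Fin (k + 1) → ℕ} (h : ∀ t a, min 2 (c t a) = min 2 (c' t a)) :
    D.Forest c ↔ D.Forest c' := by
  refine isForestAlong_congr fun x y => ?_
  rcases x with x | w <;> rcases y with y | w'
  · exact min_two_sum _ fun a => min_two_sum _ fun b => min_two_mul (min_two_mul (h _ _) (h _ _)) rfl
  · exact min_two_sum _ fun a => min_two_mul (h _ _) rfl
  · exact min_two_sum _ fun a => min_two_mul (h _ _) rfl
  · rfl

theorem forest_option_iff (c : T → Fin (k + 1) → ℕ) {t t' : T} (hne : t ≠ t')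
    (htt' : c t = c t') : D.Forest (fun x : Option T => c (x.getD t)) ↔ D.Forest c := by
  have htw : ∀ x, D.mult c (.inl t) x = D.mult c (.inl t') x := by
    rintro (x | w) <;> simp only [mult, htt']
  let e : Option T ⊕ D.W ≃ Option (T ⊕ D.W) :=
    { toFun := Sum.elim (fun x => x.map Sum.inl) fun w => some (.inr w)
      invFun := fun x => x.elim (.inl none) (Sum.map some id)
      left_inv := by rintro ((_ | x) | w) <;> rfl
      right_inv := by rintro (_ | (x | w)) <;> rfl }
  rw [Forest, Forest, ← isForestAlong_add_twin (D.mult_symm c)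
    (fun h => hne (Sum.inl_injective h)) htw, ← isForestAlong_comap_equiv e]
  refine isForestAlong_congr fun x y => ?_
  rcases x with (_ | x) | w <;> rcases y with (_ | y) | w' <;> rfl

end Surroundings

/-! ### Multisets of vectors -/

theorem exists_equiv_of_map_univ_eq {T T' α : Type} [Fintype T] [Fintype T'] {c : T → α}
    {c' : T' → α} (h : (Finset.univ : Finset T).val.map c = (Finset.univ : Finset T').val.map c') :
    ∃ e : T ≃ T', ∀ t, c t = c' (e t) := by
  classical
  have hcard : ∀ v, Fintype.card {t // c t = v} = Fintype.card {t // c' t = v} := by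
    intro v
    have := congrArg (Multiset.count v) h
    rw [Multiset.count_map, Multiset.count_map] at this
    simp only [Fintype.card_subtype, Finset.card_def, Finset.filter_val]
    simpa [eq_comm] using this
  let e : T ≃ T' := (Equiv.sigmaFiberEquiv c).symm.trans
    ((Equiv.sigmaCongrRight fun v => Fintype.equivOfCardEq (hcard v)).trans
      (Equiv.sigmaFiberEquiv c'))
  refine ⟨e, fun t => ?_⟩
  exact (Fintype.equivOfCardEq (hcard (c t)) ⟨t, rfl⟩).2.symm

theorem map_univ_get_toList {α : Type} (m : Multiset α) :
    (Finset.univ : Finset (Fin m.toList.length)).val.map (fun i => m.toList.get i) = m := by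
  rw [Fin.univ_val_map, List.ofFn_get, Multiset.coe_toList]

/-- The numbers of vertices with the various labels on the canonical path of a vector. -/
def LVec.toNat {k : ℕ} (v : LVec k) : Fin (k + 1) → ℕ := fun a => v a

namespace Surroundings

variable {k : ℕ} (D : Surroundings k) {T T' : Type}

/-- Components with the label vectors in `m` form a forest with the surroundings. -/
def ForestOf (m : Multiset (LVec k)) : Prop :=
  D.Forest fun i : Fin m.toList.length => LVec.toNat (m.toList.get i)

theorem forestOf_iff [Fintype T] {c : T → LVec k} {m : Multiset (LVec k)}
    (h : (Finset.univ : Finset T).val.map c = m) :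
    D.ForestOf m ↔ D.Forest fun t => LVec.toNat (c t) := by
  obtain ⟨e, he⟩ := exists_equiv_of_map_univ_eq (h.trans (map_univ_get_toList m).symm)
  rw [ForestOf, ← D.forest_comp_equiv e]
  simp only [he]
  rfl

theorem forestOf_cons_iff {m : Multiset (LVec k)} {v : LVec k} (hv : 2 ≤ m.count v) :
    D.ForestOf (v ::ₘ m) ↔ D.ForestOf m := by
  have hm := map_univ_get_toList m
  have h2 := hv
  rw [← hm, Multiset.count_map] at h2
  have h2' : 1 < (Finset.univ.filter fun i : Fin m.toList.length => v = m.toList.get i).card := h2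
  obtain ⟨i, j, hi, hj, hne⟩ := Finset.one_lt_card_iff.1 h2'
  simp only [Finset.mem_filter, Finset.mem_univ, true_and] at hi hj
  rw [D.forestOf_iff (c := fun x : Option (Fin m.toList.length) => m.toList.get (x.getD i))]
  · exact D.forest_option_iff (fun i => LVec.toNat (m.toList.get i)) hne (by rw [← hi, ← hj])
  · refine Eq.trans ?_ (congrArg (v ::ₘ ·) hm)
    change Multiset.map _ (none ::ₘ Multiset.map some Finset.univ.val) = _
    rw [Multiset.map_cons, Multiset.map_map, Option.getD_none, ← hi]
    rfl

theorem forestOf_cap2_add (m s : Multiset (LVec k)) :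
    D.ForestOf (cap2 m + s) ↔ D.ForestOf (m + s) := by
  have hcount : ∀ (m : Multiset (LVec k)) v, (cap2 m).count v = min 2 (m.count v) := by
    intro m v
    rw [cap2, Multiset.count_bind]
    simp only [Multiset.count_replicate]
    change (∑ a ∈ m.toFinset, if a = v then min 2 (m.count a) else 0) = _
    rw [Finset.sum_ite_eq']
    split_ifs with h
    · rfl
    · rw [Multiset.mem_toFinset] at h
      simp [h]
  induction m using Multiset.induction_on generalizing s with
  | empty => rfl
  | cons v m ih =>
    by_cases hv : 2 ≤ m.count v
    · have h1 : cap2 (v ::ₘ m) = cap2 m := by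
        ext u
        rw [hcount, hcount, Multiset.count_cons]
        split_ifs with h
        · subst h; omega
        · rfl
      rw [h1]
      refine (ih s).trans ?_
      rw [Multiset.cons_add, D.forestOf_cons_iff]
      rw [Multiset.count_add]
      omega
    · have h1 : cap2 (v ::ₘ m) = v ::ₘ cap2 m := by
        ext u
        rw [hcount, Multiset.count_cons, Multiset.count_cons, hcount]
        split_ifs with h
        · subst h; omega
        · rfl
      rw [h1, Multiset.cons_add, Multiset.cons_add, ← Multiset.add_cons, ← Multiset.add_cons]
      exact ih _

theorem forestOf_twoUnion (m s : Multiset (LVec k)) :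
    D.ForestOf (twoUnion m s) ↔ D.ForestOf (m + s) := by
  simpa [twoUnion] using D.forestOf_cap2_add (m + s) 0

end Surroundings

theorem isForestAlong_iff_exists_fiberwise {N N' : Type} {M : N → N → ℕ} {φ : N → N'} :
    IsForestAlong M φ ↔ (∀ x y, M x y ≤ 1) ∧ ∀ h : Sym2 N → ZMod 2, ∃ f : N → ZMod 2,
      (∀ x y, φ x = φ y → f x = f y) ∧ ∀ x y, M x y ≠ 0 → f x + f y = h s(x, y) := by
  refine and_congr_right fun _ => forall_congr' fun h => ⟨?_, ?_⟩
  · rintro ⟨g, hg⟩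
    exact ⟨g ∘ φ, fun x y hxy => congrArg g hxy, hg⟩
  · rintro ⟨f, hf, hf'⟩
    refine ⟨Function.extend φ f 0, fun x y hxy => ?_⟩
    have hfac : Function.FactorsThrough f φ := fun x y hxy => hf x y hxy
    rw [hfac.extend_apply, hfac.extend_apply]
    exact hf' x y hxy

namespace Surroundings

variable {k : ℕ} (D : Surroundings k)

/-- The vertex counts of three components `v` and of the components in `R`. -/
noncomputable def tripleCount (v : Fin 3 → LVec k) (R : Multiset (LVec k)) :
    Fin 3 ⊕ Fin R.toList.length → Fin (k + 1) → ℕ :=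
  Sum.elim (fun i => LVec.toNat (v i)) fun i => LVec.toNat (R.toList.get i)

theorem forestOf_add_iff {n : ℕ} (φ : Fin 3 → Fin n) (v : Fin 3 → LVec k) (u : Fin n → LVec k)
    (R : Multiset (LVec k))
    (hu : ∀ i a, (u i a : ℕ) = min 2 (∑ j, if φ j = i then (v j a : ℕ) else 0)) :
    D.ForestOf ((Finset.univ : Finset (Fin n)).val.map u + R) ↔
      (∀ x y, D.mult (tripleCount v R) x y ≤ 1) ∧
        ∀ h : Sym2 ((Fin 3 ⊕ Fin R.toList.length) ⊕ D.W) → ZMod 2,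
          ∃ f : (Fin 3 ⊕ Fin R.toList.length) ⊕ D.W → ZMod 2,
            (∀ i j, φ i = φ j → f (.inl (.inl i)) = f (.inl (.inl j))) ∧
              ∀ x y, D.mult (tripleCount v R) x y ≠ 0 → f x + f y = h s(x, y) := by
  rw [D.forestOf_iff (T := Fin n ⊕ Fin R.toList.length) (c := Sum.elim u fun i => R.toList.get i)]
  swap
  · conv_rhs => rw [← map_univ_get_toList R]
    change Multiset.map _ (Finset.univ.disjSum Finset.univ).val = _
    rw [Finset.val_disjSum, Multiset.disjSum, Multiset.map_add, Multiset.map_map, Multiset.map_map]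
    rfl
  have hcap : D.Forest (fun t => LVec.toNat (Sum.elim u (fun i => R.toList.get i) t)) ↔
      D.Forest (Sum.elim (fun i a => ∑ j, if φ j = i then (v j a : ℕ) else 0)
        fun i => LVec.toNat (R.toList.get i)) := by
    refine D.forest_congr ?_
    rintro (i | i) a
    · simp only [Sum.elim_inl, LVec.toNat, hu]
      omega
    · rfl
  rw [hcap, Forest, D.isForestAlong_mult (Sum.map φ id) id (c := tripleCount v R),
    isForestAlong_iff_exists_fiberwise]
  · refine and_congr_right fun _ => forall_congr' fun h => exists_congr fun f =>
      and_congr_left fun _ => ⟨fun H i j hij => H _ _ (by simp [hij]), fun H => ?_⟩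
    rintro ((i | i) | w) ((j | j) | w') hxy <;> simp at hxy
    · exact H i j hxy
    · rw [hxy]
    · rw [hxy]
  · rintro (i | i) a
    · simp [tripleCount, LVec.toNat]
    · simp [tripleCount]

theorem even_forestOf_twoSum (v₁ v₂ v₃ : LVec k) (R : Multiset (LVec k)) {P₁ P₂ P₃ P₄ : Prop}
    (h₁ : P₁ ↔ D.ForestOf (twoUnion {v₁, twoSum v₂ v₃} R))
    (h₂ : P₂ ↔ D.ForestOf (twoUnion {v₂, twoSum v₁ v₃} R))
    (h₃ : P₃ ↔ D.ForestOf (twoUnion {v₃, twoSum v₁ v₂} R))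
    (h₄ : P₄ ↔ D.ForestOf (twoUnion {twoSum (twoSum v₁ v₂) v₃} R)) :
    (P₄ ↔ P₁ ∧ P₂ ∧ P₃) ∧ (P₁ → P₂ ∨ P₃) ∧ (P₂ → P₁ ∨ P₃) ∧ (P₃ → P₁ ∨ P₂) := by
  rw [D.forestOf_twoUnion] at h₁ h₂ h₃ h₄
  have e2 : ∀ u v : LVec k, ({u, v} : Multiset (LVec k)) =
    (Finset.univ : Finset (Fin 2)).val.map ![u, v] := fun u v => rfl
  have e1 : ∀ u : LVec k, ({u} : Multiset (LVec k)) =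
    (Finset.univ : Finset (Fin 1)).val.map ![u] := fun u => rfl
  have hl : ∀ (v : LVec k) a, (v a : ℕ) ≤ 2 := fun v a => by omega
  rw [e2, D.forestOf_add_iff ![0, 1, 1] ![v₁, v₂, v₃]] at h₁
  · rw [e2, D.forestOf_add_iff ![1, 0, 1] ![v₁, v₂, v₃]] at h₂
    · rw [e2, D.forestOf_add_iff ![1, 1, 0] ![v₁, v₂, v₃]] at h₃
      · rw [e1, D.forestOf_add_iff ![0, 0, 0] ![v₁, v₂, v₃]] at h₄
        · refine even_isForest_identifications (D.mult (tripleCount ![v₁, v₂, v₃] R))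
            (a := .inl (.inl 0)) (b := .inl (.inl 1)) (c := .inl (.inl 2)) (by simp) (by simp)
            (by simp) (h₁.trans ?_) (h₂.trans ?_) (h₃.trans ?_) (h₄.trans ?_) <;>
          refine and_congr_right fun _ => forall_congr' fun h => exists_congr fun f =>
            and_congr_left fun _ => ?_
          all_goals simp [Fin.forall_fin_succ]
          all_goals grind
        · intro i a
          fin_cases i
          simp [Fin.sum_univ_succ, twoSum]
          omega
      · intro i a
        have := hl v₃ a
        fin_cases i <;> simp [Fin.sum_univ_succ, twoSum]; omega
    · intro i a
      have := hl v₂ a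
      fin_cases i <;> simp [Fin.sum_univ_succ, twoSum]; omega
  · intro i a
    have := hl v₁ a
    fin_cases i <;> simp [Fin.sum_univ_succ, twoSum]; omega

end Surroundings

/-! ### Contraction of the paths of a canonical forest -/

theorem count_pathLabels {k : ℕ} (v : LVec k) (a : Fin (k + 1)) :
    (pathLabels v).count a = v a := by
  rw [pathLabels, List.count_flatMap]
  simp only [Function.comp_def, List.count_replicate]
  have := List.sum_ofFn (f := fun j : Fin (k + 1) => if j == a then (v j : ℕ) else 0)
  rw [List.ofFn_eq_map] at this
  rw [this]
  simp

theorem card_filter_get_eq_count {α : Type} [DecidableEq α] (l : List α) (a : α) :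
    (Finset.univ.filter fun i => l.get i = a).card = l.count a := by
  have h := congrArg (List.count a) (List.ofFn_get l)
  rw [← Multiset.coe_count, ← Fin.univ_val_map, Multiset.count_map] at h
  rw [← h]
  simp only [eq_comm, Finset.card_def, Finset.filter_val]

theorem existsUnique_get_eq {α : Type} [DecidableEq α] {l : List α} {a : α} (h : l.count a = 1) :
    ∃! i, l.get i = a := by
  rw [← card_filter_get_eq_count, Finset.card_eq_one] at h
  obtain ⟨i, hi⟩ := h
  simp only [Finset.ext_iff, Finset.mem_filter, Finset.mem_univ, true_and,
    Finset.mem_singleton] at hi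
  exact ⟨i, (hi i).2 rfl, fun j hj => (hi j).1 hj⟩

theorem sum_pathLabels_get {k : ℕ} (v : LVec k) (a : Fin (k + 1)) :
    (∑ i, if (pathLabels v).get i = a then 1 else 0) = (v a : ℕ) := by
  rw [← count_pathLabels, ← card_filter_get_eq_count, Finset.card_filter]

noncomputable instance canonForest.fintypeV {k : ℕ} (p : Multiset (LVec k)) :
    Fintype (canonForest p).V :=
  inferInstanceAs (Fintype (Σ i : Fin p.toList.length, Fin (pathLabels (p.toList.get i)).length))

theorem canonForest_adj_succ {k : ℕ} (p : Multiset (LVec k)) (t : Fin p.toList.length)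
    {i j : Fin (pathLabels (p.toList.get t)).length} (hij : i.val + 1 = j.val) :
    (canonForest p).G.Adj ⟨t, i⟩ ⟨t, j⟩ := by
  refine (SimpleGraph.fromRel_adj _ _ _).2 ⟨?_, Or.inl ⟨rfl, hij⟩⟩
  intro h
  have h' : i = j := eq_of_heq (Sigma.mk.inj h).2
  rw [h'] at hij
  omega

theorem canonForest_adj_induction {k : ℕ} {p : Multiset (LVec k)}
    {P : (canonForest p).V → (canonForest p).V → Prop} (hP : ∀ u v, P u v → P v u)
    (h : ∀ (t : Fin p.toList.length) (i j : Fin (pathLabels (p.toList.get t)).length),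
      i.val + 1 = j.val → P ⟨t, i⟩ ⟨t, j⟩) {u v : (canonForest p).V}
    (huv : (canonForest p).G.Adj u v) : P u v := by
  obtain ⟨t, i⟩ := u
  obtain ⟨t', j⟩ := v
  rcases ((SimpleGraph.fromRel_adj _ _ _).1 huv).2 with ⟨h1, h2⟩ | ⟨h1, h2⟩
  · obtain rfl : t = t' := h1
    exact h t i j h2
  · obtain rfl : t' = t := h1
    exact hP _ _ (h t' j i h2)

/-- The path of the canonical forest that contains a given vertex. -/
def canonForest.path {k : ℕ} {p : Multiset (LVec k)} (u : (canonForest p).V) :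
    Fin p.toList.length := Sigma.fst u

theorem canonForest_path_eq_of_adj {k : ℕ} {p : Multiset (LVec k)} {u v : (canonForest p).V}
    (huv : (canonForest p).G.Adj u v) : canonForest.path u = canonForest.path v :=
  canonForest_adj_induction (P := fun u v => canonForest.path u = canonForest.path v)
    (fun _ _ h => h.symm) (fun _ _ _ _ => rfl) huv

theorem canonForest_factor {k : ℕ} {p : Multiset (LVec k)} {f : (canonForest p).V → ZMod 2}
    (hf : ∀ u v, (canonForest p).G.Adj u v → f u = f v) :
    ∃ g : Fin p.toList.length → ZMod 2, ∀ u, f u = g (canonForest.path u) := by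
  refine ⟨fun t => if h : 0 < (pathLabels (p.toList.get t)).length then f ⟨t, ⟨0, h⟩⟩ else 0, ?_⟩
  rintro ⟨t, ⟨i, hi⟩⟩
  have h0 : 0 < (pathLabels (p.toList.get t)).length := by omega
  refine Eq.trans ?_ (dif_pos h0).symm
  induction i with
  | zero => rfl
  | succ i ih =>
    exact (hf _ _ (canonForest_adj_succ p t (i := ⟨i, by omega⟩) (j := ⟨i + 1, hi⟩) rfl)).symm.trans
      (ih (by omega))

theorem canonForest_coboundary {k : ℕ} {p : Multiset (LVec k)}
    (h : Sym2 (canonForest p).V → ZMod 2) : ∃ f : (canonForest p).V → ZMod 2,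
      ∀ u v, (canonForest p).G.Adj u v → f u + f v = h s(u, v) := by
  let s (t : Fin p.toList.length) (j : ℕ) : ZMod 2 :=
    if hj : j + 1 < (pathLabels (p.toList.get t)).length then
      h s(⟨t, ⟨j, by omega⟩⟩, ⟨t, ⟨j + 1, hj⟩⟩) else 0
  let f : (canonForest p).V → ZMod 2 := fun u => ∑ j ∈ Finset.range u.2.val, s u.1 j
  refine ⟨f, fun u v huv => canonForest_adj_induction
    (P := fun u v => f u + f v = h s(u, v)) ?_ ?_ huv⟩
  · intro u v huv
    rw [add_comm, huv, Sym2.eq_swap]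
  · rintro t ⟨i, hi⟩ ⟨j, hj⟩ hij
    obtain rfl : i + 1 = j := hij
    have h1 : f ⟨t, ⟨i + 1, hj⟩⟩ = f ⟨t, ⟨i, hi⟩⟩ + s t i := Finset.sum_range_succ _ _
    rw [h1, ← add_assoc, zmod_two_add_self, zero_add]
    exact dif_pos hj

theorem canonForest_count {k : ℕ} (p : Multiset (LVec k)) (t : Fin p.toList.length)
    (a : Fin (k + 1)) : LVec.toNat (p.toList.get t) a = ∑ u : (canonForest p).V,
      if canonForest.path u = t then (if (canonForest p).lab u = a then 1 else 0) else 0 := by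
  refine Eq.trans ?_ (Fintype.sum_sigma (α := fun i : Fin p.toList.length =>
    Fin (pathLabels (p.toList.get i)).length) (fun u => if u.1 = t then
      (if (pathLabels (p.toList.get u.1)).get u.2 = a then 1 else 0) else 0)).symm
  rw [Finset.sum_eq_single t]
  · simp only [if_true]
    exact (sum_pathLabels_get _ _).symm
  · intro b _ hb
    simp [hb]
  · simp

namespace Surroundings

variable {k : ℕ} (D : Surroundings k)

open Classical in
/-- The multiplicities of the edges of a labeled graph in its surroundings. -/
noncomputable def vertexMult (F : LGraph k) : F.V ⊕ D.W → F.V ⊕ D.W → ℕ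
  | .inl u, .inl v => (if F.G.Adj u v then 1 else 0) + D.J (F.lab u) (F.lab v)
  | .inl u, .inr w => D.L w (F.lab u)
  | .inr w, .inl u => D.L w (F.lab u)
  | .inr w, .inr w' => D.H w w'

theorem isForestAlong_vertexMult (F : LGraph k) {T : Type} (π : F.V → T)
    (hπ : ∀ u v, F.G.Adj u v → π u = π v)
    (hfac : ∀ f : F.V → ZMod 2, (∀ u v, F.G.Adj u v → f u = f v) →
      ∃ g : T → ZMod 2, ∀ u, f u = g (π u))
    (hsurj : ∀ h : Sym2 F.V → ZMod 2, ∃ f : F.V → ZMod 2,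
      ∀ u v, F.G.Adj u v → f u + f v = h s(u, v)) :
    IsForestAlong (D.vertexMult F) id ↔
      IsForestAlong (D.mult fun u a => if F.lab u = a then 1 else 0) (Sum.map π id) := by
  classical
  let A : F.V ⊕ D.W → F.V ⊕ D.W → Prop := fun x y => ∃ u v, x = .inl u ∧ y = .inl v ∧ F.G.Adj u v
  have hM : IsForestAlong (D.vertexMult F) id ↔ IsForestAlong (fun x y =>
      (if A x y then 1 else 0) + D.mult (fun u a => if F.lab u = a then 1 else 0) x y) id := by
    refine isForestAlong_congr fun x y => ?_
    rcases x with u | w <;> rcases y with v | w' <;> simp [A, vertexMult, mult]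
  rw [hM]
  refine isForestAlong_add_forest ?_ (Sum.map π id) ?_ ?_ ?_
  · rintro _ _ ⟨u, v, rfl, rfl, h⟩
    exact ⟨v, u, rfl, rfl, h.symm⟩
  · rintro _ _ ⟨u, v, rfl, rfl, h⟩
    simp [hπ u v h]
  · intro f hf
    obtain ⟨g, hg⟩ := hfac (f ∘ Sum.inl) fun u v h => hf _ _ ⟨u, v, rfl, rfl, h⟩
    refine ⟨Sum.elim g (f ∘ Sum.inr), ?_⟩
    rintro (u | w)
    · exact hg u
    · rfl
  · intro h
    obtain ⟨f, hf⟩ := hsurj (h ∘ Sym2.map Sum.inl)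
    refine ⟨Sum.elim f 0, ?_⟩
    rintro _ _ ⟨u, v, rfl, rfl, huv⟩
    simpa using hf u v huv

theorem isForestAlong_vertexMult_canonForest (p : Multiset (LVec k)) :
    IsForestAlong (D.vertexMult (canonForest p)) id ↔ D.ForestOf p :=
  (D.isForestAlong_vertexMult (canonForest p) canonForest.path
    (fun _ _ => canonForest_path_eq_of_adj) (fun _ => canonForest_factor)
    canonForest_coboundary).trans
  (D.isForestAlong_mult canonForest.path id (canonForest_count p)).symm

end Surroundings

/-! ### Counting edges with given ends -/

theorem card_subtype_sum {A B : Type} [Finite A] [Finite B] (p : A ⊕ B → Prop) :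
    Nat.card {e // p e} = Nat.card {a // p (.inl a)} + Nat.card {b // p (.inr b)} := by
  rw [Nat.card_congr (Equiv.subtypeSum (p := p)), Nat.card_sum]

theorem card_subtype_eq_zero {A : Type} {p : A → Prop} (h : ∀ a, ¬ p a) :
    Nat.card {a // p a} = 0 := by
  have : IsEmpty {a // p a} := ⟨fun a => h a.1 a.2⟩
  exact Nat.card_of_isEmpty

theorem card_subtype_eq_one {A : Type} {p : A → Prop} {a : A} (h : ∀ b, p b ↔ b = a) :
    Nat.card {a // p a} = 1 := by
  simp only [h]
  exact Nat.card_unique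

open Classical in
theorem card_subtype_val_eq {A : Type} {P : A → Prop} {q : {a // P a} → Prop} (a : A)
    (h : ∀ b, q b ↔ b.1 = a) : Nat.card {b // q b} = if P a then 1 else 0 := by
  split_ifs with ha
  · exact card_subtype_eq_one (a := ⟨a, ha⟩) fun b =>
      (h b).trans (Subtype.ext_iff (a1 := b) (a2 := ⟨a, ha⟩)).symm
  · exact card_subtype_eq_zero fun b hb => ha ((h b).1 hb ▸ b.2)

/-! ### Glueings -/

open Classical in
/-- The surroundings given by an extension datum. -/
noncomputable def ExtDatum.surroundings {k : ℕ} (d : ExtDatum k) : Surroundings k where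
  W := d.W
  finW := d.finW
  J a b := if d.J a b then 1 else 0
  Jsymm a b := by rw [show d.J a b ↔ d.J b a from ⟨d.Jsymm a b, d.Jsymm b a⟩]
  L w a := if a ∈ d.L w then 1 else 0
  H w w' := if d.H0.Adj w w' then 1 else 0
  Hsymm w w' := by rw [SimpleGraph.adj_comm]

/-- The edges of a glueing as a sum of types. -/
def GlueEdge.equivSum {k : ℕ} (F : LGraph k) (d : ExtDatum k) :
    GlueEdge F d ≃ (F.G.edgeSet ⊕ d.H0.edgeSet) ⊕
      ({e : Sym2 F.V // ∃ u v, e = s(u, v) ∧ d.J (F.lab u) (F.lab v)} ⊕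
        {e : d.W × F.V // F.lab e.2 ∈ d.L e.1}) where
  toFun
    | .ofForest e => .inl (.inl e)
    | .ofDatum e => .inl (.inr e)
    | .ofJ e => .inr (.inl e)
    | .ofL e => .inr (.inr e)
  invFun := Sum.elim (Sum.elim .ofForest .ofDatum) (Sum.elim .ofJ .ofL)
  left_inv := by rintro (e | e | e | e) <;> rfl
  right_inv := by rintro ((e | e) | (e | e)) <;> rfl

theorem card_glueEdge {k : ℕ} (F : LGraph k) [Finite F.V] (d : ExtDatum k)
    (x y : F.V ⊕ d.W) : Nat.card {e : GlueEdge F d // e.ends = s(x, y)} =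
      d.surroundings.vertexMult F x y := by
  classical
  have := d.finW
  rw [Nat.card_congr ((GlueEdge.equivSum F d).subtypeEquiv
    (q := fun e => ((GlueEdge.equivSum F d).symm e).ends = s(x, y)) fun e => by simp),
    card_subtype_sum, card_subtype_sum, card_subtype_sum]
  simp only [GlueEdge.equivSum, Equiv.coe_fn_symm_mk, Sum.elim_inl, Sum.elim_inr, GlueEdge.ends]
  have hmem : ∀ {A : Type} {f : A → F.V ⊕ d.W} {e : Sym2 A} {z : F.V ⊕ d.W},
      z ∈ s(x, y) → (∀ a, f a ≠ z) → ¬ e.map f = s(x, y) := by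
    intro A f e z hz hf he
    rw [← he, Sym2.mem_map] at hz
    obtain ⟨a, -, ha⟩ := hz
    exact hf a ha
  have hinl : ∀ (e : Sym2 F.V) u v, e.map Sum.inl = s((.inl u : F.V ⊕ d.W), .inl v) ↔ e = s(u, v) :=
    fun e u v => by
      rw [← Sym2.map_mk]
      exact (Sym2.map.injective Sum.inl_injective).eq_iff
  have hinr : ∀ (e : Sym2 d.W) u v, e.map Sum.inr = s((.inr u : F.V ⊕ d.W), .inr v) ↔ e = s(u, v) :=
    fun e u v => by
      rw [← Sym2.map_mk]
      exact (Sym2.map.injective Sum.inr_injective).eq_iff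
  rcases x with u | w <;> rcases y with v | w'
  · rw [card_subtype_val_eq s(u, v) fun e => hinl _ _ _,
      card_subtype_eq_zero fun e => hmem (Sym2.mem_mk_left _ _) (by simp),
      card_subtype_val_eq s(u, v) fun e => hinl _ _ _, card_subtype_eq_zero fun e => by simp]
    simp only [SimpleGraph.mem_edgeSet, Surroundings.vertexMult, ExtDatum.surroundings, add_zero]
    congr 2
    refine propext ⟨?_, fun h => ⟨u, v, rfl, h⟩⟩
    rintro ⟨u', v', h, hJ⟩
    rcases Sym2.eq_iff.1 h with ⟨rfl, rfl⟩ | ⟨rfl, rfl⟩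
    · exact hJ
    · exact d.Jsymm _ _ hJ
  · rw [card_subtype_eq_zero fun e => hmem (Sym2.mem_mk_right _ _) (by simp),
      card_subtype_eq_zero fun e => hmem (Sym2.mem_mk_left _ _) (by simp),
      card_subtype_eq_zero fun e => hmem (Sym2.mem_mk_right _ _) (by simp),
      card_subtype_val_eq (w', u) fun e => by simp [Prod.ext_iff]]
    simp [Surroundings.vertexMult, ExtDatum.surroundings]
  · rw [card_subtype_eq_zero fun e => hmem (Sym2.mem_mk_left _ _) (by simp),
      card_subtype_eq_zero fun e => hmem (Sym2.mem_mk_right _ _) (by simp),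
      card_subtype_eq_zero fun e => hmem (Sym2.mem_mk_left _ _) (by simp),
      card_subtype_val_eq (w, v) fun e => by simp [Prod.ext_iff]]
    simp [Surroundings.vertexMult, ExtDatum.surroundings]
  · rw [card_subtype_eq_zero fun e => hmem (Sym2.mem_mk_left _ _) (by simp),
      card_subtype_val_eq s(w, w') fun e => hinr _ _ _,
      card_subtype_eq_zero fun e => hmem (Sym2.mem_mk_left _ _) (by simp),
      card_subtype_eq_zero fun e => by simp]
    simp [Surroundings.vertexMult, ExtDatum.surroundings]

theorem glue_hasNoCycle_iff {k : ℕ} (p : Multiset (LVec k)) (d : ExtDatum k) :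
    (glue (canonForest p) d).HasNoCycle ↔ d.surroundings.ForestOf p := by
  have := d.finW
  have : Finite (GlueEdge (canonForest p) d) := Finite.of_equiv _ (GlueEdge.equivSum _ d).symm
  rw [← Surroundings.isForestAlong_vertexMult_canonForest,
    Graph.hasNoCycle_iff_isForestAlong _ id Function.injective_id fun _ x _ _ => ⟨x, rfl⟩]
  refine isForestAlong_congr fun x y => ?_
  rw [← card_glueEdge]
  rfl

/-! ### Multiplicities in clique extensions -/

namespace ExtGraph

/-- The number of edges with ends `x` and `y`. -/
noncomputable def mult (G : ExtGraph) (x y : Option G.V) : ℕ :=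
  Nat.card {e // G.ends e = s(x, y)}

theorem mult_comm (G : ExtGraph) (x y : Option G.V) : G.mult x y = G.mult y x := by
  rw [mult, mult, Sym2.eq_swap]

/-- The number of edges that a join adds between two vertices with labels `a` and `b`. -/
def joinCount (i j a b : ℕ+) : ℕ :=
  (if a = i ∧ b = j then 1 else 0) + if a = j ∧ b = i then 1 else 0

theorem joinCount_comm (i j a b : ℕ+) : joinCount i j a b = joinCount i j b a := by
  simp only [joinCount, and_comm, add_comm]

theorem mult_join (G : ExtGraph) [Finite G.V] [Finite G.E] {i j : ℕ+} (hij : i ≠ j)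
    {x y : G.V} {a b : ℕ+} (ha : G.lab x = a) (hb : G.lab y = b) :
    (G.join i j).mult (some x) (some y) = G.mult (some x) (some y) + joinCount i j a b := by
  rw [mult, ← ha, ← hb]
  refine (card_subtype_sum _).trans ?_
  congr 1
  simp only [join, Sum.elim_inr]
  by_cases h1 : G.lab x = i ∧ G.lab y = j
  · have h2 : ¬ (G.lab x = j ∧ G.lab y = i) := fun h => hij (h1.1.symm.trans h.1)
    rw [card_subtype_eq_one (a := ⟨(x, y), h1⟩)]
    · simp [joinCount, h1, hij]
    · rintro ⟨⟨x', y'⟩, h⟩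
      simp only [Sym2.eq_iff, Option.some.injEq, Subtype.mk.injEq, Prod.mk.injEq]
      refine ⟨?_, Or.inl⟩
      rintro (h3 | ⟨rfl, rfl⟩)
      · exact h3
      · exact absurd h.symm h2
  · by_cases h2 : G.lab x = j ∧ G.lab y = i
    · rw [card_subtype_eq_one (a := ⟨(y, x), h2.symm⟩)]
      · simp [joinCount, h2, hij.symm]
      · rintro ⟨⟨x', y'⟩, h⟩
        simp only [Sym2.eq_iff, Option.some.injEq, Subtype.mk.injEq, Prod.mk.injEq]
        refine ⟨?_, Or.inr⟩
        rintro (⟨rfl, rfl⟩ | h3)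
        · exact absurd h h1
        · exact h3
    · rw [card_subtype_eq_zero]
      · simp [joinCount, h1, h2]
      · rintro ⟨⟨x', y'⟩, h⟩
        simp only [Sym2.eq_iff, Option.some.injEq]
        rintro (⟨rfl, rfl⟩ | ⟨rfl, rfl⟩)
        · exact h1 h
        · exact h2 h.symm

theorem mult_join_none (G : ExtGraph) [Finite G.V] [Finite G.E] (i j : ℕ+) (x : Option G.V) :
    (G.join i j).mult none x = G.mult none x := by
  rw [mult]
  refine (card_subtype_sum _).trans ?_
  simp only [join, Sum.elim_inl, Sum.elim_inr]
  rw [card_subtype_eq_zero (A := {e : G.V × G.V // G.lab e.1 = i ∧ G.lab e.2 = j}), add_zero]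
  rintro ⟨⟨x', y'⟩, h⟩
  simp

/-- No edge is incident with the zero-vertex. -/
def ZeroFree (G : ExtGraph) : Prop := ∀ e, none ∉ G.ends e

theorem map_ends_ne {A V : Type} {f : A → V} {s : Sym2 (Option A)} {x y : Option V} {v : V}
    (hv : some v ∈ s(x, y)) (hf : ∀ a, f a ≠ v) : ¬ s.map (Option.map f) = s(x, y) := by
  intro he
  rw [← he, Sym2.mem_map] at hv
  obtain ⟨_ | a, -, ha⟩ := hv
  · simp at ha
  · exact hf a (Option.some.inj ha)

theorem map_ends_ne_none {A V : Type} {f : A → V} {s : Sym2 (Option A)} {x : Option V}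
    (hs : none ∉ s) : ¬ s.map (Option.map f) = s(none, x) := by
  intro he
  have hv : none ∈ s(none, x) := Sym2.mem_mk_left _ _
  rw [← he, Sym2.mem_map] at hv
  obtain ⟨_ | a, ha, ha'⟩ := hv
  · exact hs ha
  · simp at ha'

theorem map_ends_eq_iff {A V : Type} {f : A → V} (hf : Function.Injective f)
    {s : Sym2 (Option A)} {x y : Option A} :
    s.map (Option.map f) = s(x.map f, y.map f) ↔ s = s(x, y) := by
  rw [← Sym2.map_mk]
  exact (Sym2.map.injective (Option.map_injective hf)).eq_iff

section Union

variable (G H : ExtGraph) [Finite G.E] [Finite H.E]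

theorem mult_union_inl (x y : Option G.V) (h : H.ZeroFree ∨ ∃ v, x = some v) :
    (G.union H).mult (x.map Sum.inl) (y.map Sum.inl) = G.mult x y := by
  refine (card_subtype_sum _).trans ?_
  simp only [union, Sum.elim_inl, Sum.elim_inr, map_ends_eq_iff Sum.inl_injective]
  rw [card_subtype_eq_zero (A := H.E), add_zero]
  · rfl
  · intro e
    rcases x with _ | x
    · exact map_ends_ne_none ((h.resolve_right (by simp)) e)
    · exact map_ends_ne (v := .inl x) (Sym2.mem_mk_left _ _) (by simp)

theorem mult_union_inr (x y : Option H.V) (h : G.ZeroFree ∨ ∃ v, x = some v) :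
    (G.union H).mult (x.map Sum.inr) (y.map Sum.inr) = H.mult x y := by
  refine (card_subtype_sum _).trans ?_
  simp only [union, Sum.elim_inl, Sum.elim_inr, map_ends_eq_iff Sum.inr_injective]
  rw [card_subtype_eq_zero (A := G.E), zero_add]
  · rfl
  · intro e
    rcases x with _ | x
    · exact map_ends_ne_none ((h.resolve_right (by simp)) e)
    · exact map_ends_ne (v := .inr x) (Sym2.mem_mk_left _ _) (by simp)

theorem mult_union_inl_inr (hH : H.ZeroFree) (x : Option G.V) (y : H.V) :
    (G.union H).mult (x.map Sum.inl) (some (.inr y)) = 0 := by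
  refine (card_subtype_sum _).trans ?_
  simp only [union, Sum.elim_inl, Sum.elim_inr]
  rw [card_subtype_eq_zero, card_subtype_eq_zero]
  · intro e
    rcases x with _ | x
    · exact map_ends_ne_none (hH e)
    · exact map_ends_ne (v := .inl x) (Sym2.mem_mk_left _ _) (by simp)
  · intro e
    exact map_ends_ne (v := .inr y) (Sym2.mem_mk_right _ _) (by simp)

theorem mult_union_inr_inl (hG : G.ZeroFree) (x : Option H.V) (y : G.V) :
    (G.union H).mult (x.map Sum.inr) (some (.inl y)) = 0 := by
  refine (card_subtype_sum _).trans ?_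
  simp only [union, Sum.elim_inl, Sum.elim_inr]
  rw [card_subtype_eq_zero, card_subtype_eq_zero]
  · intro e
    exact map_ends_ne (v := .inl y) (Sym2.mem_mk_right _ _) (by simp)
  · intro e
    rcases x with _ | x
    · exact map_ends_ne_none (hG e)
    · exact map_ends_ne (v := .inr x) (Sym2.mem_mk_left _ _) (by simp)

end Union

end ExtGraph

theorem CliqueExpr.finite_eval (μ : CliqueExpr) : Finite μ.eval.V ∧ Finite μ.eval.E := by
  induction μ with
  | vertex i => exact ⟨inferInstanceAs (Finite Unit), inferInstanceAs (Finite Empty)⟩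
  | relabel i j hij μ ih => exact ih
  | join i j hij μ ih =>
    have := ih.1
    have := ih.2
    exact ⟨ih.1, inferInstanceAs (Finite (_ ⊕ {e : μ.eval.V × μ.eval.V // _}))⟩
  | union μ ν ih ih' =>
    have := ih.1
    have := ih.2
    have := ih'.1
    have := ih'.2
    exact ⟨inferInstanceAs (Finite (_ ⊕ _)), inferInstanceAs (Finite (_ ⊕ _))⟩

theorem CliqueExpr.zeroFree_eval (μ : CliqueExpr) : μ.eval.ZeroFree := by
  induction μ with
  | vertex i => exact fun e => e.elim
  | relabel i j hij μ ih => exact ih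
  | join i j hij μ ih =>
    rintro (e | e)
    · exact ih e
    · exact fun h => by rcases Sym2.mem_iff.1 h with h | h <;> exact (Option.some_ne_none _ h.symm)
  | union μ ν ih ih' =>
    rintro (e | e) h
    · obtain ⟨_ | a, ha, ha'⟩ := Sym2.mem_map.1 h
      · exact ih e ha
      · simp at ha'
    · obtain ⟨_ | a, ha, ha'⟩ := Sym2.mem_map.1 h
      · exact ih' e ha
      · simp at ha'

namespace CliqueExt

theorem finite_eval (τ : CliqueExt) (F : ExtGraph) [Finite F.V] [Finite F.E] :
    Finite (τ.eval F).V ∧ Finite (τ.eval F).E := by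
  induction τ with
  | var => exact ⟨‹_›, ‹_›⟩
  | relabel i j hij τ ih => exact ih
  | join i j hij τ ih =>
    have := ih.1
    have := ih.2
    exact ⟨ih.1, inferInstanceAs (Finite (_ ⊕ {e : (τ.eval F).V × (τ.eval F).V // _}))⟩
  | unionLeft τ μ ih =>
    have := ih.1
    have := ih.2
    have := μ.finite_eval.1
    have := μ.finite_eval.2
    exact ⟨inferInstanceAs (Finite (_ ⊕ _)), inferInstanceAs (Finite (_ ⊕ _))⟩
  | unionRight μ τ ih =>
    have := ih.1
    have := ih.2
    have := μ.finite_eval.1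
    have := μ.finite_eval.2
    exact ⟨inferInstanceAs (Finite (_ ⊕ _)), inferInstanceAs (Finite (_ ⊕ _))⟩

/-- The effect of a clique extension on the labels of the graph that replaces the variable. -/
def relabeling : CliqueExt → ℕ+ → ℕ+
  | .var => id
  | .relabel i j _ τ => fun a => if τ.relabeling a = i then j else τ.relabeling a
  | .join _ _ _ τ => τ.relabeling
  | .unionLeft τ _ => τ.relabeling
  | .unionRight _ τ => τ.relabeling

/-- The number of edges that a clique extension adds between vertices with given labels of the
graph that replaces the variable. -/
def innerCount : CliqueExt → ℕ+ → ℕ+ → ℕ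
  | .var => fun _ _ => 0
  | .relabel _ _ _ τ => τ.innerCount
  | .join i j _ τ => fun a b =>
      τ.innerCount a b + ExtGraph.joinCount i j (τ.relabeling a) (τ.relabeling b)
  | .unionLeft τ _ => τ.innerCount
  | .unionRight _ τ => τ.innerCount

/-- The number of edges that a clique extension adds between its own vertices and the vertices with
a given label of the graph that replaces the variable. -/
def mixedCount : (τ : CliqueExt) → (τ.eval .empty).V → ℕ+ → ℕ
  | .var => fun _ _ => 0
  | .relabel _ _ _ τ => τ.mixedCount
  | .join i j _ τ => fun w a =>
      τ.mixedCount w a + ExtGraph.joinCount i j (τ.relabeling a) ((τ.eval .empty).lab w)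
  | .unionLeft τ _ => Sum.elim τ.mixedCount fun _ _ => 0
  | .unionRight _ τ => Sum.elim (fun _ _ => 0) τ.mixedCount

theorem innerCount_comm (τ : CliqueExt) (a b : ℕ+) : τ.innerCount a b = τ.innerCount b a := by
  induction τ with
  | var => rfl
  | relabel i j hij τ ih => exact ih
  | join i j hij τ ih => simp only [innerCount, ih, ExtGraph.joinCount_comm i j (τ.relabeling a)]
  | unionLeft τ μ ih => exact ih
  | unionRight μ τ ih => exact ih

variable (F : ExtGraph)

theorem lab_inner (τ : CliqueExt) (u : F.V) :
    (τ.eval F).lab (τ.inner F u) = τ.relabeling (F.lab u) := by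
  induction τ with
  | var => rfl
  | relabel i j hij τ ih => simp only [eval, ExtGraph.relabel, inner, relabeling, ih]
  | join i j hij τ ih => exact ih
  | unionLeft τ μ ih => exact ih
  | unionRight μ τ ih => exact ih

theorem lab_outer (τ : CliqueExt) (w : (τ.eval .empty).V) :
    (τ.eval F).lab (τ.outer F w) = (τ.eval .empty).lab w := by
  induction τ with
  | var => exact w.elim
  | relabel i j hij τ ih => simp only [eval, ExtGraph.relabel, outer]; rw [ih w]
  | join i j hij τ ih => exact ih w
  | unionLeft τ μ ih =>
    rcases w with w | w
    · exact ih w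
    · rfl
  | unionRight μ τ ih =>
    rcases w with w | w
    · rfl
    · exact ih w

theorem inner_injective (τ : CliqueExt) : Function.Injective (τ.inner F) := by
  induction τ with
  | var => exact Function.injective_id
  | relabel i j hij τ ih => exact ih
  | join i j hij τ ih => exact ih
  | unionLeft τ μ ih => exact Sum.inl_injective.comp ih
  | unionRight μ τ ih => exact Sum.inr_injective.comp ih

theorem outer_injective (τ : CliqueExt) : Function.Injective (τ.outer F) := by
  induction τ with
  | var => exact fun w => w.elim
  | relabel i j hij τ ih => exact ih
  | join i j hij τ ih => exact ih
  | unionLeft τ μ ih => exact Sum.map_injective.2 ⟨ih, Function.injective_id⟩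
  | unionRight μ τ ih => exact Sum.map_injective.2 ⟨Function.injective_id, ih⟩

theorem inner_ne_outer (τ : CliqueExt) (u : F.V) (w : (τ.eval .empty).V) :
    τ.inner F u ≠ τ.outer F w := by
  induction τ with
  | var => exact w.elim
  | relabel i j hij τ ih => exact ih w
  | join i j hij τ ih => exact ih w
  | unionLeft τ μ ih =>
    rcases w with w | w
    · exact fun h => ih w (Sum.inl_injective h)
    · exact Sum.inl_ne_inr
  | unionRight μ τ ih =>
    rcases w with w | w
    · exact Sum.inr_ne_inl
    · exact fun h => ih w (Sum.inr_injective h)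

variable [Finite F.V] [Finite F.E]

theorem mult_inner_inner (τ : CliqueExt) (x y : Option F.V) :
    (τ.eval F).mult (x.map (τ.inner F)) (y.map (τ.inner F)) = F.mult x y +
      x.elim 0 fun u => y.elim 0 fun v => τ.innerCount (F.lab u) (F.lab v) := by
  induction τ with
  | var => rcases x with _ | x <;> rcases y with _ | y <;> rfl
  | relabel i j hij τ ih => exact ih
  | join i j hij τ ih =>
    have := (τ.finite_eval F).1
    have := (τ.finite_eval F).2
    rcases x with _ | x
    · exact (ExtGraph.mult_join_none _ _ _ _).trans ih
    · rcases y with _ | y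
      · exact (ExtGraph.mult_comm _ _ _).trans
          ((ExtGraph.mult_join_none _ _ _ _).trans ((ExtGraph.mult_comm _ _ _).trans ih))
      · have h := ExtGraph.mult_join (τ.eval F) hij (τ.lab_inner F x) (τ.lab_inner F y)
        exact h.trans ((congrArg (· + _) ih).trans (add_assoc _ _ _))
  | unionLeft τ μ ih =>
    have := (τ.finite_eval F).2
    have := μ.finite_eval.2
    have h := (τ.eval F).mult_union_inl μ.eval (x.map (τ.inner F))
      (y.map (τ.inner F)) (.inl μ.zeroFree_eval)
    rcases x with _ | x <;> rcases y with _ | y <;> exact h.trans ih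
  | unionRight μ τ ih =>
    have := (τ.finite_eval F).2
    have := μ.finite_eval.2
    have h := μ.eval.mult_union_inr (τ.eval F) (x.map (τ.inner F))
      (y.map (τ.inner F)) (.inl μ.zeroFree_eval)
    rcases x with _ | x <;> rcases y with _ | y <;> exact h.trans ih

theorem mult_inner_outer (τ : CliqueExt) (x : Option F.V) (w : (τ.eval .empty).V) :
    (τ.eval F).mult (x.map (τ.inner F)) (some (τ.outer F w)) =
      x.elim 0 fun u => τ.mixedCount w (F.lab u) := by
  induction τ with
  | var => exact w.elim
  | relabel i j hij τ ih => exact ih w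
  | join i j hij τ ih =>
    have := (τ.finite_eval F).1
    have := (τ.finite_eval F).2
    rcases x with _ | x
    · exact (ExtGraph.mult_join_none _ _ _ _).trans (ih w)
    · have h := ExtGraph.mult_join (τ.eval F) hij (τ.lab_inner F x) (τ.lab_outer F w)
      exact h.trans (congrArg (· + _) (ih w))
  | unionLeft τ μ ih =>
    have := (τ.finite_eval F).2
    have := μ.finite_eval.2
    rcases w with w | w
    · have h := (τ.eval F).mult_union_inl μ.eval (x.map (τ.inner F))
        (some (τ.outer F w)) (.inl μ.zeroFree_eval)
      rcases x with _ | x <;> exact h.trans (ih w)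
    · have h := (τ.eval F).mult_union_inl_inr μ.eval μ.zeroFree_eval (x.map (τ.inner F)) w
      rcases x with _ | x <;> exact h
  | unionRight μ τ ih =>
    have := (τ.finite_eval F).2
    have := μ.finite_eval.2
    rcases w with w | w
    · have h := μ.eval.mult_union_inr_inl (τ.eval F) μ.zeroFree_eval (x.map (τ.inner F)) w
      rcases x with _ | x <;> exact h
    · have h := μ.eval.mult_union_inr (τ.eval F) (x.map (τ.inner F))
        (some (τ.outer F w)) (.inl μ.zeroFree_eval)
      rcases x with _ | x <;> exact h.trans (ih w)

theorem mult_outer_outer (τ : CliqueExt) (w w' : (τ.eval .empty).V) :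
    (τ.eval F).mult (some (τ.outer F w)) (some (τ.outer F w')) =
      (τ.eval .empty).mult (some w) (some w') := by
  have hV : Finite ExtGraph.empty.V := inferInstanceAs (Finite Empty)
  have hE : Finite ExtGraph.empty.E := inferInstanceAs (Finite Empty)
  induction τ with
  | var => exact w.elim
  | relabel i j hij τ ih => exact ih w w'
  | join i j hij τ ih =>
    have := (τ.finite_eval F).1
    have := (τ.finite_eval F).2
    have := (τ.finite_eval .empty).1
    have := (τ.finite_eval .empty).2
    have h := ExtGraph.mult_join (τ.eval F) hij (τ.lab_outer F w) (τ.lab_outer F w')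
    exact h.trans ((congrArg (· + _) (ih w w')).trans
      (ExtGraph.mult_join (τ.eval .empty) hij rfl rfl).symm)
  | unionLeft τ μ ih =>
    have := (τ.finite_eval F).2
    have := (τ.finite_eval .empty).2
    have := μ.finite_eval.2
    have hμ := μ.zeroFree_eval
    rcases w with w | w <;> rcases w' with w' | w'
    · exact ((τ.eval F).mult_union_inl μ.eval (some (τ.outer F w)) (some (τ.outer F w'))
          (.inl hμ)).trans
        ((ih w w').trans ((τ.eval .empty).mult_union_inl μ.eval (some w) (some w') (.inl hμ)).symm)
    · exact ((τ.eval F).mult_union_inl_inr μ.eval hμ (some (τ.outer F w)) w').trans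
        ((τ.eval .empty).mult_union_inl_inr μ.eval hμ (some w) w').symm
    · exact (ExtGraph.mult_comm _ _ _).trans
        (((τ.eval F).mult_union_inl_inr μ.eval hμ (some (τ.outer F w')) w).trans
          (((τ.eval .empty).mult_union_inl_inr μ.eval hμ (some w') w).symm.trans
            (ExtGraph.mult_comm _ _ _)))
    · exact (ExtGraph.mult_union_inr (τ.eval F) μ.eval (some w) (some w') (.inr ⟨w, rfl⟩)).trans
        (ExtGraph.mult_union_inr (τ.eval .empty) μ.eval (some w) (some w') (.inr ⟨w, rfl⟩)).symm
  | unionRight μ τ ih =>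
    have := (τ.finite_eval F).2
    have := (τ.finite_eval .empty).2
    have := μ.finite_eval.2
    have hμ := μ.zeroFree_eval
    rcases w with w | w <;> rcases w' with w' | w'
    · exact (ExtGraph.mult_union_inl μ.eval (τ.eval F) (some w) (some w') (.inr ⟨w, rfl⟩)).trans
        (ExtGraph.mult_union_inl μ.eval (τ.eval .empty) (some w) (some w') (.inr ⟨w, rfl⟩)).symm
    · exact (ExtGraph.mult_comm _ _ _).trans
        ((μ.eval.mult_union_inr_inl (τ.eval F) hμ (some (τ.outer F w')) w).trans
          ((μ.eval.mult_union_inr_inl (τ.eval .empty) hμ (some w') w).symm.trans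
            (ExtGraph.mult_comm _ _ _)))
    · exact (μ.eval.mult_union_inr_inl (τ.eval F) hμ (some (τ.outer F w)) w').trans
        (μ.eval.mult_union_inr_inl (τ.eval .empty) hμ (some w) w').symm
    · exact (μ.eval.mult_union_inr (τ.eval F) (some (τ.outer F w)) (some (τ.outer F w'))
          (.inl hμ)).trans
        ((ih w w').trans (μ.eval.mult_union_inr (τ.eval .empty) (some w) (some w') (.inl hμ)).symm)

end CliqueExt

/-! ### Compatibility -/

theorem canonForest_existsUnique_zero {k : ℕ} {p : Multiset (LVec k)} (hp : IsPattern p) :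
    ∃! u : (canonForest p).V, (canonForest p).lab u = 0 := by
  obtain ⟨-, z, hz, hz1, hz0, hother⟩ := hp
  rw [← Multiset.coe_toList p, Multiset.coe_count] at hz1
  obtain ⟨t, ht, htu⟩ := existsUnique_get_eq hz1
  have hc : (pathLabels (p.toList.get t)).count 0 = 1 := by
    rw [count_pathLabels, ht, hz0]
    rfl
  obtain ⟨i, hi, hiu⟩ := existsUnique_get_eq hc
  refine ⟨⟨t, i⟩, hi, ?_⟩
  rintro ⟨t', i'⟩ h'
  have h0 : (pathLabels (p.toList.get t')).get i' = 0 := h'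
  have hne : p.toList.get t' 0 ≠ 0 := by
    intro h
    have hmem : (0 : Fin (k + 1)) ∈ pathLabels (p.toList.get t') := h0 ▸ List.get_mem _ _
    have := List.count_pos_iff.2 hmem
    rw [count_pathLabels, h] at this
    simp at this
  obtain rfl : t' = t := by
    refine htu t' ?_
    by_contra hz'
    exact hne (hother _ (Multiset.mem_toList.1 (List.get_mem _ _)) hz')
  obtain rfl := hiu i' h0
  rfl

section ZeroVertex

variable {k : ℕ} {F : LGraph k}

open Classical in
/-- The vertex of the extended graph that corresponds to a vertex of a labeled graph. -/
noncomputable def LGraph.extVertex (u : F.V) : Option F.toExt.V :=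
  if h : F.lab u ≠ 0 then some ⟨u, h⟩ else none

theorem LGraph.extVertex_injective (hF : ∃! u : F.V, F.lab u = 0) :
    Function.Injective (LGraph.extVertex (F := F)) := by
  intro u v huv
  unfold LGraph.extVertex at huv
  split_ifs at huv with h1 h2 h2
  · exact congrArg Subtype.val (Option.some.inj huv)
  · exact hF.unique (not_not.1 h1) (not_not.1 h2)

open Classical in
theorem LGraph.mult_toExt (hF : ∃! u : F.V, F.lab u = 0) (u v : F.V) :
    F.toExt.mult (LGraph.extVertex u) (LGraph.extVertex v) = if F.G.Adj u v then 1 else 0 := by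
  refine (card_subtype_val_eq (P := fun e => e ∈ F.G.edgeSet) s(u, v) fun e => ?_).trans ?_
  · have : F.toExt.ends e = e.1.map LGraph.extVertex := by
      unfold LGraph.toExt
      congr 1
    rw [this, ← Sym2.map_mk]
    exact (Sym2.map.injective (LGraph.extVertex_injective hF)).eq_iff
  · simp only [SimpleGraph.mem_edgeSet]

end ZeroVertex

open Classical in
/-- The surroundings of a labeled forest given by a clique extension and a set of its vertices. -/
noncomputable def CliqueExt.surroundings (k : ℕ) (τ : CliqueExt) (S : Set (Option τ.graph.V)) :
    Surroundings k where
  W := {w : (τ.eval .empty).V // some w ∈ S}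
  finW := by
    have : Finite ExtGraph.empty.V := inferInstanceAs (Finite Empty)
    have : Finite ExtGraph.empty.E := inferInstanceAs (Finite Empty)
    have := (τ.finite_eval .empty).1
    infer_instance
  J a b := if a = 0 ∨ b = 0 then 0 else τ.innerCount a.val.toPNat' b.val.toPNat'
  Jsymm a b := by simp only [or_comm, τ.innerCount_comm a.val.toPNat']
  L w a := if a = 0 then 0 else τ.mixedCount w.1 a.val.toPNat'
  H w w' := (τ.eval .empty).mult (some w.1) (some w'.1)
  Hsymm _ _ := ExtGraph.mult_comm _ _ _

theorem LGraph.lab_toExt {k : ℕ} (F : LGraph k) (v : F.toExt.V) :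
    F.toExt.lab v = (F.lab v.1).val.toPNat' := by
  apply PNat.coe_injective
  have h : (F.lab v.1).val ≠ 0 := fun h => v.2 (Fin.ext h)
  rw [Nat.toPNat'_coe, if_pos (Nat.pos_of_ne_zero h)]
  rfl

theorem CliqueExt.compatible_iff {k : ℕ} (τ : CliqueExt) (S : Set (Option τ.graph.V))
    {F : LGraph k} [Finite F.V] (hF : ∃! u : F.V, F.lab u = 0) :
    τ.Compatible S F.toExt ↔ IsForestAlong ((τ.surroundings k S).vertexMult F) id := by
  classical
  have : Finite F.toExt.V := inferInstanceAs (Finite {v : F.V // F.lab v ≠ 0})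
  have : Finite F.toExt.E := inferInstanceAs (Finite F.G.edgeSet)
  have := (τ.finite_eval F.toExt).2
  have := (τ.surroundings k S).finW
  let ι : F.V ⊕ (τ.surroundings k S).W → Option (τ.eval F.toExt).V :=
    Sum.elim (fun u => (LGraph.extVertex u).map (τ.inner F.toExt))
      fun w => some (τ.outer F.toExt w.1)
  have hinj : Function.Injective ι := by
    rintro (u | w) (v | w') h
    · exact congrArg _ (LGraph.extVertex_injective hF
        (Option.map_injective (τ.inner_injective F.toExt) h))
    · obtain ⟨u', -, h'⟩ := Option.map_eq_some_iff.1 h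
      exact absurd h' (τ.inner_ne_outer _ _ _)
    · obtain ⟨u', -, h'⟩ := Option.map_eq_some_iff.1 h.symm
      exact absurd h' (τ.inner_ne_outer _ _ _)
    · exact congrArg _ (Subtype.ext (τ.outer_injective F.toExt (Option.some.inj h)))
  have hnone : none ∈ Set.range ι := by
    obtain ⟨u, hu, -⟩ := hF
    exact ⟨.inl u, by simp [ι, LGraph.extVertex, hu]⟩
  have hrange : Set.range (Option.map (τ.inner F.toExt)) ∪ Option.map (τ.outer F.toExt) '' S =
      Set.range ι := by
    apply Set.Subset.antisymm
    · rintro _ (⟨_ | u, rfl⟩ | ⟨_ | w, hw, rfl⟩)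
      · exact hnone
      · refine ⟨.inl u.1, ?_⟩
        have : LGraph.extVertex u.1 = some u := dif_pos u.2
        simp [ι, this]
      · exact hnone
      · exact ⟨.inr ⟨w, hw⟩, rfl⟩
    · rintro _ ⟨u | w, rfl⟩
      · exact Or.inl ⟨_, rfl⟩
      · exact Or.inr ⟨some w.1, w.2, rfl⟩
  rw [CliqueExt.Compatible, hrange,
    ((τ.eval F.toExt).graph.induce (Set.range ι)).hasNoCycle_iff_isForestAlong ι hinj
      fun _ _ _ h => h.2.1]
  refine isForestAlong_congr fun x y => congrArg _ ?_
  have hcard : Nat.card {e // ((τ.eval F.toExt).graph.induce (Set.range ι)).IsLink e (ι x) (ι y)} =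
      (τ.eval F.toExt).mult (ι x) (ι y) :=
    Nat.card_congr (Equiv.subtypeEquivRight fun e => ⟨fun h => h.1, fun h => ⟨h, ⟨x, rfl⟩, ⟨y, rfl⟩⟩⟩)
  rw [hcard]
  have hmixed : ∀ (u : F.V) (w : (τ.surroundings k S).W),
      (τ.eval F.toExt).mult (ι (.inl u)) (ι (.inr w)) = (τ.surroundings k S).L w (F.lab u) := by
    intro u w
    refine (τ.mult_inner_outer F.toExt (LGraph.extVertex u) w.1).trans ?_
    unfold LGraph.extVertex
    split_ifs with h
    · simp only [LGraph.lab_toExt]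
      exact (if_neg h).symm
    · exact (if_pos (not_not.1 h)).symm
  rcases x with u | w <;> rcases y with v | w'
  · refine (τ.mult_inner_inner F.toExt (LGraph.extVertex u) (LGraph.extVertex v)).trans ?_
    rw [LGraph.mult_toExt hF]
    refine congrArg _ ?_
    unfold LGraph.extVertex
    split_ifs with h1 h2 h2
    · simp only [LGraph.lab_toExt]
      exact (if_neg (by tauto)).symm
    · exact (if_pos (by tauto)).symm
    · exact (if_pos (by tauto)).symm
    · exact (if_pos (by tauto)).symm
  · exact hmixed u w'
  · exact (ExtGraph.mult_comm _ _ _).trans (hmixed v w)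
  · exact τ.mult_outer_outer F.toExt w.1 w'.1

theorem CliqueExt.compatible_canonForest_iff {k : ℕ} (τ : CliqueExt)
    (S : Set (Option τ.graph.V)) {p : Multiset (LVec k)} (hp : IsPattern p) :
    τ.Compatible S (canonForest p).toExt ↔ (τ.surroundings k S).ForestOf p := by
  rw [← Surroundings.isForestAlong_vertexMult_canonForest,
    τ.compatible_iff S (canonForest_existsUnique_zero hp)]

/-! ### The main theorem -/

theorem ncard_setOf_fin_succ {n : ℕ} (P : Fin (n + 1) → Prop) [Decidable (P 0)] :
    {i | P i}.ncard = (if P 0 then 1 else 0) + {i : Fin n | P i.succ}.ncard := by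
  classical
  simp only [Set.ncard_eq_toFinset_card', Set.toFinset_ofPred, Fin.card_filter_univ_succ]
  split_ifs <;> omega

open scoped symmDiff in
theorem ncard_sep_symmDiff {α : Type} [DecidableEq α] (A B : Finset α) (P : α → Prop) :
    {a | a ∈ A ∆ B ∧ P a}.ncard ≡ {a | a ∈ A ∧ P a}.ncard + {a | a ∈ B ∧ P a}.ncard [MOD 2] := by
  classical
  have hcard : ∀ C : Finset α, {a | a ∈ C ∧ P a}.ncard = (C.filter P).card := fun C => by
    rw [← Set.ncard_coe_finset, Finset.coe_filter]
  rw [hcard, hcard, hcard]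
  have h1 : ((A ∆ B).filter P) = (A.filter P) ∆ (B.filter P) := by
    ext a
    simp only [Finset.mem_filter, Finset.mem_symmDiff]
    tauto
  have h2 := Finset.card_sdiff_add_card_inter (A.filter P) (B.filter P)
  have h3 := Finset.card_sdiff_add_card_inter (B.filter P) (A.filter P)
  rw [Finset.inter_comm] at h3
  rw [h1, symmDiff, Finset.sup_eq_union, Finset.card_union_of_disjoint disjoint_sdiff_sdiff]
  unfold Nat.ModEq
  omega

open scoped Classical symmDiff in
theorem even_number_acyclic {k : ℕ} (v₁ v₂ v₃ : LVec k)
    (R p₁ p₂ p₃ p₄ : Multiset (LVec k))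
    (hp₁ : p₁ = twoUnion {v₁, twoSum v₂ v₃} R)
    (hp₂ : p₂ = twoUnion {v₂, twoSum v₁ v₃} R)
    (hp₃ : p₃ = twoUnion {v₃, twoSum v₁ v₂} R)
    (hp₄ : p₄ = twoUnion {twoSum (twoSum v₁ v₂) v₃} R)
    (h₁ : IsPattern p₁) (h₂ : IsPattern p₂) (h₃ : IsPattern p₃) (h₄ : IsPattern p₄) :
    (∀ d : ExtDatum k,
      Even {i : Fin 4 | (glue (canonForest (![p₁, p₂, p₃, p₄] i)) d).HasNoCycle}.ncard ∧
      {i : Fin 3 | (glue (canonForest (![p₂, p₃, p₄] i)) d).HasNoCycle}.ncard ≡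
        (if (glue (canonForest p₁) d).HasNoCycle then 1 else 0) [MOD 2]) ∧
    (∀ (τ : CliqueExt) (S : Set (Option τ.graph.V)), τ.IsPartialSolution S →
      Even {i : Fin 4 | τ.Compatible S (canonForest (![p₁, p₂, p₃, p₄] i)).toExt}.ncard) ∧
    PatternsEquiv {p₁} ({p₂} ∆ {p₃} ∆ {p₄}) := by
  have hfour : ∀ P : Multiset (LVec k) → Prop, {i : Fin 4 | P (![p₁, p₂, p₃, p₄] i)}.ncard =
      (if P p₁ then 1 else 0) + {i : Fin 3 | P (![p₂, p₃, p₄] i)}.ncard := fun P =>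
    ncard_setOf_fin_succ _
  have hthree : ∀ P : Multiset (LVec k) → Prop, {i : Fin 3 | P (![p₂, p₃, p₄] i)}.ncard =
      (if P p₂ then 1 else 0) + ((if P p₃ then 1 else 0) + (if P p₄ then 1 else 0)) := fun P => by
    rw [ncard_setOf_fin_succ, ncard_setOf_fin_succ, ncard_setOf_fin_succ,
      Set.eq_empty_of_isEmpty {i : Fin 0 | _}, Set.ncard_empty]
    rfl
  have hpar : ∀ {P₁ P₂ P₃ P₄ : Prop} [Decidable P₁] [Decidable P₂] [Decidable P₃] [Decidable P₄],
      (P₄ ↔ P₁ ∧ P₂ ∧ P₃) ∧ (P₁ → P₂ ∨ P₃) ∧ (P₂ → P₁ ∨ P₃) ∧ (P₃ → P₁ ∨ P₂) →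
      (if P₂ then 1 else 0) + ((if P₃ then 1 else 0) + (if P₄ then 1 else 0)) ≡
        (if P₁ then 1 else 0) [MOD 2] := by
    intro P₁ P₂ P₃ P₄ _ _ _ _ h
    by_cases h1 : P₁ <;> by_cases h2 : P₂ <;> by_cases h3 : P₃ <;> simp_all <;> decide
  have heven : ∀ {P : Prop} [Decidable P] {n : ℕ}, n ≡ (if P then 1 else 0) [MOD 2] →
      Even ((if P then 1 else 0) + n) := by
    intro P _ n h
    rw [Nat.even_iff]
    unfold Nat.ModEq at h
    split_ifs at h ⊢ <;> omega
  have hglue (d : ExtDatum k) := hpar (d.surroundings.even_forestOf_twoSum v₁ v₂ v₃ R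
    ((glue_hasNoCycle_iff p₁ d).trans (by rw [hp₁]))
    ((glue_hasNoCycle_iff p₂ d).trans (by rw [hp₂]))
    ((glue_hasNoCycle_iff p₃ d).trans (by rw [hp₃]))
    ((glue_hasNoCycle_iff p₄ d).trans (by rw [hp₄])))
  have hcomp (τ : CliqueExt) (S : Set (Option τ.graph.V)) :=
    hpar ((τ.surroundings k S).even_forestOf_twoSum v₁ v₂ v₃ R
      ((τ.compatible_canonForest_iff S h₁).trans (by rw [hp₁]))
      ((τ.compatible_canonForest_iff S h₂).trans (by rw [hp₂]))
      ((τ.compatible_canonForest_iff S h₃).trans (by rw [hp₃]))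
      ((τ.compatible_canonForest_iff S h₄).trans (by rw [hp₄])))
  refine ⟨fun d => ?_, fun τ S _ => ?_, fun τ S _ => ?_⟩
  · rw [hfour fun p => (glue (canonForest p) d).HasNoCycle,
      hthree fun p => (glue (canonForest p) d).HasNoCycle]
    exact ⟨heven (hglue d), hglue d⟩
  · rw [hfour fun p => τ.Compatible S (canonForest p).toExt,
      hthree fun p => τ.Compatible S (canonForest p).toExt]
    exact heven (hcomp τ S)
  · have hsingle : ∀ p : Multiset (LVec k),
        {q | q ∈ ({p} : Finset (Multiset (LVec k))) ∧
          τ.Compatible S (canonForest q).toExt}.ncard =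
          if τ.Compatible S (canonForest p).toExt then 1 else 0 := by
      intro p
      split_ifs with h
      · rw [Set.ncard_eq_one]
        refine ⟨p, Set.ext fun q => ?_⟩
        simp only [Finset.mem_singleton, Set.mem_ofPred_eq, Set.mem_singleton_iff]
        exact ⟨fun h => h.1, fun hq => ⟨hq, hq ▸ h⟩⟩
      · rw [Set.ncard_eq_zero]
        refine Set.eq_empty_of_forall_notMem fun q hq => h ?_
        rw [← Finset.mem_singleton.1 hq.1]
        exact hq.2
    refine Nat.ModEq.symm ?_
    rw [hsingle]
    refine Nat.ModEq.trans ?_ (hcomp τ S)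
    refine (ncard_sep_symmDiff _ _ _).trans ?_
    rw [← add_assoc, hsingle]
    refine Nat.ModEq.add_right _ ((ncard_sep_symmDiff _ _ _).trans ?_)
    rw [hsingle, hsingle]
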